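/- arXiv:1606.03499 — 2 statements merged into one kernel-verified Lean document; each statement's English description precedes it below -/
import Mathlib

section
/- Let n ≥ 1. There exists a constant a₂ > 0 depending only on n such that for every smooth ℤⁿ-periodic real-valued eigenfunction ψ : ℝⁿ → ℝ of the Euclidean Laplacian with eigenvalue λ ≥ 1 and ψ not identically zero, every open ball of radius a₂ λ^{-1/2} in ℝⁿ contains a zero of ψ; consequently every nodal domain Ω of ψ satisfies in(Ω) ≤ a₂ λ^{-1/2}. -/
/-!
A positive `u` with `Δu + λu ≤ 0` on a ball cannot coexist with a function `w` vanishing on the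
bounding sphere, positive somewhere inside, and satisfying `Δw + λw > 0` where it is positive: if
`k` is the least number with `w ≤ k u`, then `w - k u` attains its maximum `0` at an interior point,
where its Laplacian would be positive. In dimension `n` the function `w = (R² - |x - c|²)²`
qualifies as soon as `2λR² > (n + 2)²`. Hence on such a ball neither `ψ` nor `-ψ` is positive, and
the intermediate value theorem gives a zero.
-/

open MeasureTheory Metric Filter Real

noncomputable section

/-- `ψ : ℝⁿ → ℝ` is `ℤⁿ`-periodic: `ψ (x + v) = ψ x` for every integer vector `v`. -/
def ZnPeriodic (n : ℕ) (ψ : EuclideanSpace ℝ (Fin n) → ℝ) : Prop :=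
  ∀ (x : EuclideanSpace ℝ (Fin n)) (v : Fin n → ℤ),
    ψ (show EuclideanSpace ℝ (Fin n) from WithLp.toLp 2 fun i => x i + (v i : ℝ)) = ψ x

/-- The Euclidean Laplacian `Δψ = ∑ᵢ ∂²ψ/∂xᵢ²`. -/
def lap (n : ℕ) (ψ : EuclideanSpace ℝ (Fin n) → ℝ) (x : EuclideanSpace ℝ (Fin n)) : ℝ :=
  ∑ i : Fin n,
    fderiv ℝ (fun y => fderiv ℝ ψ y (EuclideanSpace.single i (1:ℝ))) x
      (EuclideanSpace.single i (1:ℝ))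

/-- `Ω` is a nodal domain of `ψ`: a connected component of `{ψ ≠ 0}`. -/
def IsNodalDomain {n : ℕ} (ψ : EuclideanSpace ℝ (Fin n) → ℝ)
    (Ω : Set (EuclideanSpace ℝ (Fin n))) : Prop :=
  ∃ x, ψ x ≠ 0 ∧ Ω = connectedComponentIn {y | ψ y ≠ 0} x

/-- The inner radius of a set: the supremum of radii of open balls contained in it. -/
def innerRadius {n : ℕ} (Ω : Set (EuclideanSpace ℝ (Fin n))) : ℝ :=
  sSup {ρ : ℝ | 0 < ρ ∧ ∃ c, Metric.ball c ρ ⊆ Ω}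

/-- The fundamental domain `[0,1)ⁿ` of the torus `ℝⁿ/ℤⁿ`. -/
def fundDom (n : ℕ) : Set (EuclideanSpace ℝ (Fin n)) :=
  {x | ∀ i, x i ∈ Set.Ico (0:ℝ) 1}

/-- `S ⊆ ℕ` has full density: `#(S ∩ [1,N]) / N → 1`. -/
def FullDensity (S : Set ℕ) : Prop :=
  Filter.Tendsto (fun N => (Nat.card ↥(S ∩ Set.Icc 1 N) : ℝ) / N) Filter.atTop (nhds 1)

section SecondDerivativeTest

open InnerProductSpace Laplacian

theorem deriv_deriv_nonpos_of_isLocalMax {f : ℝ → ℝ} {a : ℝ} (hf : ContinuousAt f a)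
    (hmax : IsLocalMax f a) : deriv (deriv f) a ≤ 0 := by
  by_contra! hpos
  have hmin : IsLocalMin f a := isLocalMin_of_deriv_deriv_pos hpos hmax.deriv_eq_zero hf
  have hconst : f =ᶠ[nhds a] fun _ ↦ f a := by
    filter_upwards [hmax, hmin] with t hle hge using le_antisymm hle hge
  simp [hconst.deriv.deriv_eq] at hpos

theorem deriv_deriv_comp_add_smul {𝕜 E F : Type*} [NontriviallyNormedField 𝕜]
    [NormedAddCommGroup E] [NormedSpace 𝕜 E] [NormedAddCommGroup F] [NormedSpace 𝕜 F]
    {f : E → F} {x : E} (hf : ContDiffAt 𝕜 2 f x) (v : E) :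
    deriv (deriv fun t : 𝕜 ↦ f (x + t • v)) 0 = iteratedFDeriv 𝕜 2 f x ![v, v] := by
  have hline (t : 𝕜) : HasDerivAt (fun t : 𝕜 ↦ x + t • v) v t := by
    simpa using ((hasDerivAt_id t).smul_const v).const_add x
  have hline_tendsto : Tendsto (fun t : 𝕜 ↦ x + t • v) (nhds 0) (nhds x) := by
    simpa using (hline 0).continuousAt.tendsto
  have hderiv : (deriv fun t : 𝕜 ↦ f (x + t • v)) =ᶠ[nhds 0]
      fun t ↦ fderiv 𝕜 f (x + t • v) v := by
    filter_upwards [hline_tendsto.eventually (hf.eventually (by simp))] with t ht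
    exact ((ht.differentiableAt (by simp)).hasFDerivAt.comp_hasDerivAt t (hline t)).deriv
  have hfderiv : DifferentiableAt 𝕜 (fderiv 𝕜 f) x :=
    (hf.fderiv_right (m := 1) one_add_one_eq_two.le).differentiableAt one_ne_zero
  have hcomp : HasDerivAt (fun t : 𝕜 ↦ fderiv 𝕜 f (x + t • v)) (fderiv 𝕜 (fderiv 𝕜 f) x v) 0 :=
    hfderiv.hasFDerivAt.comp_hasDerivAt_of_eq 0 (hline 0) (by simp)
  rw [hderiv.deriv_eq, iteratedFDeriv_two_apply]
  simpa using (hcomp.clm_apply (hasDerivAt_const 0 v)).deriv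

variable {E : Type*} [NormedAddCommGroup E] [InnerProductSpace ℝ E] [FiniteDimensional ℝ E]

theorem laplacian_eq_sum_deriv_deriv {F ι : Type*} [NormedAddCommGroup F] [NormedSpace ℝ F]
    [Fintype ι] {f : E → F} {x : E} (hf : ContDiffAt ℝ 2 f x) (b : OrthonormalBasis ι ℝ E) :
    Δ f x = ∑ i, deriv (deriv fun t : ℝ ↦ f (x + t • b i)) 0 := by
  simp only [laplacian_eq_iteratedFDeriv_orthonormalBasis f b, deriv_deriv_comp_add_smul hf]

theorem laplacian_nonpos_of_isLocalMax {f : E → ℝ} {x : E} (hf : ContDiffAt ℝ 2 f x)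
    (hmax : IsLocalMax f x) : Δ f x ≤ 0 := by
  rw [laplacian_eq_sum_deriv_deriv hf (stdOrthonormalBasis ℝ E)]
  refine Finset.sum_nonpos fun i _ ↦ ?_
  have hline : ContinuousAt (fun t : ℝ ↦ x + t • stdOrthonormalBasis ℝ E i) 0 := by fun_prop
  refine deriv_deriv_nonpos_of_isLocalMax ?_ ?_
  · exact ContinuousAt.comp (by simpa using hf.continuousAt) hline
  · exact IsLocalMax.comp_continuous (f := f) (by simpa using hmax) hline

end SecondDerivativeTest

section Comparison

open InnerProductSpace Laplacian

theorem exists_pos_mul_touching {X : Type*} [TopologicalSpace X] {K : Set X} {u w : X → ℝ}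
    (hK : IsCompact K) (hu : ContinuousOn u K) (hw : ContinuousOn w K)
    (hupos : ∀ x ∈ K, 0 < u x) (hwpos : ∃ x ∈ K, 0 < w x) :
    ∃ k > 0, ∃ x ∈ K, w x = k * u x ∧ ∀ y ∈ K, w y ≤ k * u y := by
  obtain ⟨z, hzK, hwz⟩ := hwpos
  obtain ⟨x, hxK, hmax⟩ := hK.exists_isMaxOn ⟨z, hzK⟩ (hw.div hu fun y hy ↦ (hupos y hy).ne')
  refine ⟨w x / u x, (div_pos hwz (hupos z hzK)).trans_le (hmax hzK), x, hxK,
    (div_mul_cancel₀ _ (hupos x hxK).ne').symm, fun y hy ↦ ?_⟩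
  exact (div_le_iff₀ (hupos y hy)).1 (hmax hy)

variable {E : Type*} [NormedAddCommGroup E] [InnerProductSpace ℝ E] [FiniteDimensional ℝ E]

theorem nonpos_of_strict_subsolution_of_pos_supersolution {U : Set E} {u w : E → ℝ} {lam : ℝ}
    (hU : IsOpen U) (hUc : IsCompact (closure U))
    (hu : ContinuousOn u (closure U)) (hw : ContinuousOn w (closure U))
    (hu₂ : ∀ x ∈ U, ContDiffAt ℝ 2 u x) (hw₂ : ∀ x ∈ U, ContDiffAt ℝ 2 w x)
    (hupos : ∀ x ∈ closure U, 0 < u x) (hwfr : ∀ x ∈ frontier U, w x ≤ 0)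
    (hΔu : ∀ x ∈ U, Δ u x + lam * u x ≤ 0)
    (hΔw : ∀ x ∈ U, 0 < w x → 0 < Δ w x + lam * w x) :
    ∀ x ∈ closure U, w x ≤ 0 := by
  by_contra! hwpos
  obtain ⟨k, hk, x, hx, htouch, hle⟩ := exists_pos_mul_touching hUc hu hw hupos hwpos
  have hwx : 0 < w x := htouch ▸ mul_pos hk (hupos x hx)
  have hxU : x ∈ U := by
    by_contra hxU
    exact hwx.not_ge (hwfr x (by rw [hU.frontier_eq]; exact ⟨hx, hxU⟩))
  have hmax : IsLocalMax (w - k • u) x := by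
    filter_upwards [hU.mem_nhds hxU] with y hy
    simpa [← htouch] using hle y (subset_closure hy)
  have hΔ : Δ w x - k * Δ u x ≤ 0 := by
    have hku : ContDiffAt ℝ 2 (k • u) x := (hu₂ x hxU).const_smul k
    rw [← smul_eq_mul, ← laplacian_smul k (hu₂ x hxU), ← (hw₂ x hxU).laplacian_sub hku]
    exact laplacian_nonpos_of_isLocalMax ((hw₂ x hxU).sub hku) hmax
  have hku : k * (Δ u x + lam * u x) ≤ 0 := mul_nonpos_of_nonneg_of_nonpos hk.le (hΔu x hxU)
  have := hΔw x hxU hwx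
  rw [htouch] at this
  linarith

end Comparison

section ZerosInBalls

open InnerProductSpace Laplacian Module

/-- The test function `x ↦ (R² - |x - c|²)²`, positive inside the ball of radius `R` about `c` and
vanishing on its boundary; it is compared with eigenfunctions. It is not cut off outside the ball,
so that it is smooth everywhere. -/
def ballBump {E : Type*} [NormedAddCommGroup E] (c : E) (R : ℝ) (x : E) : ℝ :=
  (R ^ 2 - ‖x - c‖ ^ 2) ^ 2

variable {E : Type*} [NormedAddCommGroup E] [InnerProductSpace ℝ E]

theorem contDiff_ballBump (c : E) (R : ℝ) {m : WithTop ℕ∞} : ContDiff ℝ m (ballBump c R) :=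
  (contDiff_const.sub ((contDiff_id.sub contDiff_const).norm_sq ℝ)).pow 2

theorem ballBump_add_smul (c : E) (R : ℝ) (x v : E) (t : ℝ) :
    ballBump c R (x + t • v) =
      (R ^ 2 - ‖x - c‖ ^ 2 - 2 * inner ℝ (x - c) v * t - ‖v‖ ^ 2 * t ^ 2) ^ 2 := by
  rw [ballBump, add_sub_right_comm, norm_add_sq_real, inner_smul_right, norm_smul, mul_pow,
    Real.norm_eq_abs, sq_abs]
  ring

theorem deriv_deriv_sq_quadratic (s a b : ℝ) :
    deriv (deriv fun t : ℝ ↦ (s - a * t - b * t ^ 2) ^ 2) 0 = 2 * a ^ 2 - 4 * b * s := by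
  have hquad (t : ℝ) : HasDerivAt (fun t : ℝ ↦ s - a * t - b * t ^ 2) (-a - 2 * b * t) t :=
    ((((hasDerivAt_id t).const_mul a).const_sub s).sub
      ((hasDerivAt_pow 2 t).const_mul b)).congr_deriv (by simp; ring)
  have hlin : HasDerivAt (fun t : ℝ ↦ -a - 2 * b * t) (-(2 * b)) 0 := by
    simpa using ((hasDerivAt_id (0 : ℝ)).const_mul (2 * b)).const_sub (-a)
  have hsq : (deriv fun t : ℝ ↦ (s - a * t - b * t ^ 2) ^ 2) =
      fun t ↦ 2 * (s - a * t - b * t ^ 2) * (-a - 2 * b * t) :=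
    funext fun t ↦ (((hquad t).fun_pow 2).congr_deriv (by simp)).deriv
  rw [hsq, (((hquad 0).const_mul 2).fun_mul hlin).deriv]
  ring

variable [FiniteDimensional ℝ E]

theorem laplacian_ballBump (c : E) (R : ℝ) (x : E) :
    Δ (ballBump c R) x =
      8 * ‖x - c‖ ^ 2 - 4 * finrank ℝ E * (R ^ 2 - ‖x - c‖ ^ 2) := by
  set b := stdOrthonormalBasis ℝ E
  have hsecond (i : Fin (finrank ℝ E)) :
      deriv (deriv fun t : ℝ ↦ ballBump c R (x + t • b i)) 0 =
        8 * inner ℝ (x - c) (b i) ^ 2 - 4 * (R ^ 2 - ‖x - c‖ ^ 2) := by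
    simp only [ballBump_add_smul, deriv_deriv_sq_quadratic, b.norm_eq_one]
    ring
  simp only [laplacian_eq_sum_deriv_deriv (contDiff_ballBump c R).contDiffAt b, hsecond,
    Finset.sum_sub_distrib, ← Finset.mul_sum, b.sum_sq_inner_left, Finset.sum_const,
    Finset.card_univ, Fintype.card_fin, nsmul_eq_mul]
  ring

theorem laplacian_ballBump_add_mul_pos {lam R : ℝ}
    (hlamR : ((finrank ℝ E : ℝ) + 2) ^ 2 < 2 * (lam * R ^ 2)) (c x : E) :
    0 < Δ (ballBump c R) x + lam * ballBump c R x := by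
  rw [laplacian_ballBump, ballBump]
  set s := R ^ 2 - ‖x - c‖ ^ 2 with hs
  have hcomplete_square :
      lam * (8 * ‖x - c‖ ^ 2 - 4 * finrank ℝ E * s + lam * s ^ 2) =
        (lam * s - 2 * (finrank ℝ E + 2)) ^ 2 +
          4 * (2 * (lam * R ^ 2) - ((finrank ℝ E : ℝ) + 2) ^ 2) := by
    rw [hs]; ring
  have hlam : 0 < lam := by
    refine pos_of_mul_pos_left ?_ (sq_nonneg R)
    linarith [sq_nonneg ((finrank ℝ E : ℝ) + 2)]
  refine pos_of_mul_pos_right ?_ hlam.le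
  rw [hcomplete_square]
  have := sq_nonneg (lam * s - 2 * (finrank ℝ E + 2))
  linarith

theorem exists_nonpos_mem_closedBall {u : E → ℝ} {c : E} {lam R : ℝ} (hR : 0 < R)
    (hlamR : ((finrank ℝ E : ℝ) + 2) ^ 2 < 2 * (lam * R ^ 2))
    (hu : ContinuousOn u (closedBall c R)) (hu₂ : ∀ x ∈ ball c R, ContDiffAt ℝ 2 u x)
    (hΔu : ∀ x ∈ ball c R, Δ u x + lam * u x ≤ 0) :
    ∃ x ∈ closedBall c R, u x ≤ 0 := by
  by_contra! hupos
  have hcl : closure (ball c R) = closedBall c R := closure_ball c hR.ne'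
  have hbump_sphere : ∀ x ∈ frontier (ball c R), ballBump c R x ≤ 0 := by
    intro x hx
    rw [frontier_ball c hR.ne', mem_sphere_iff_norm] at hx
    simp [ballBump, hx]
  have hbump_nonpos : ballBump c R c ≤ 0 :=
    nonpos_of_strict_subsolution_of_pos_supersolution isOpen_ball
      (hcl ▸ isCompact_closedBall c R) (hcl ▸ hu)
      (contDiff_ballBump c R (m := 0)).continuous.continuousOn hu₂
      (fun _ _ ↦ (contDiff_ballBump c R).contDiffAt) (hcl ▸ hupos) hbump_sphere hΔu
      (fun x _ _ ↦ laplacian_ballBump_add_mul_pos hlamR c x)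
      c (subset_closure (mem_ball_self hR))
  have hbump_pos : 0 < ballBump c R c := by
    simpa [ballBump] using pow_pos (pow_pos hR 2) 2
  exact hbump_pos.not_ge hbump_nonpos

theorem exists_zero_mem_closedBall {ψ : E → ℝ} {c : E} {lam R : ℝ} (hR : 0 < R)
    (hlamR : ((finrank ℝ E : ℝ) + 2) ^ 2 < 2 * (lam * R ^ 2))
    (hψ : ContinuousOn ψ (closedBall c R)) (hψ₂ : ∀ x ∈ ball c R, ContDiffAt ℝ 2 ψ x)
    (hΔψ : ∀ x ∈ ball c R, Δ ψ x = -lam * ψ x) :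
    ∃ z ∈ closedBall c R, ψ z = 0 := by
  obtain ⟨x, hx, hψx⟩ : ∃ x ∈ closedBall c R, ψ x ≤ 0 :=
    exists_nonpos_mem_closedBall hR hlamR hψ hψ₂ fun x hx ↦ by simp [hΔψ x hx]
  obtain ⟨y, hy, hψy⟩ : ∃ y ∈ closedBall c R, -ψ y ≤ 0 :=
    exists_nonpos_mem_closedBall hR hlamR hψ.neg (fun y hy ↦ (hψ₂ y hy).neg)
      fun y hy ↦ by simp [← Pi.neg_def, laplacian_neg, hΔψ y hy]
  exact (convex_closedBall c R).isPreconnected.intermediate_value hx hy hψ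
    ⟨hψx, neg_nonpos.1 hψy⟩

end ZerosInBalls

open InnerProductSpace Laplacian in
theorem lap_eq_laplacian {n : ℕ} {ψ : EuclideanSpace ℝ (Fin n) → ℝ} {x : EuclideanSpace ℝ (Fin n)}
    (hψ : ContDiffAt ℝ 2 ψ x) : lap n ψ x = Δ ψ x := by
  have hfderiv : DifferentiableAt ℝ (fderiv ℝ ψ) x :=
    (hψ.fderiv_right (m := 1) one_add_one_eq_two.le).differentiableAt one_ne_zero
  simp [lap, laplacian_eq_iteratedFDeriv_orthonormalBasis ψ (EuclideanSpace.basisFun (Fin n) ℝ),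
    iteratedFDeriv_two_apply, fderiv_clm_apply hfderiv (differentiableAt_const _)]

theorem innerRadius_le {n : ℕ} {Ω : Set (EuclideanSpace ℝ (Fin n))} {r : ℝ}
    (hΩ : ∀ c, ¬ball c r ⊆ Ω) : innerRadius Ω ≤ r := by
  have hr : 0 ≤ r := by
    by_contra! hneg
    exact hΩ 0 (by simp [ball_eq_empty.2 hneg.le])
  refine Real.sSup_le ?_ hr
  rintro ρ ⟨-, c, hc⟩
  by_contra! hlt
  exact hΩ c ((ball_subset_ball hlt.le).trans hc)

theorem mul_rpow_neg_half_sq {lam : ℝ} (hlam : 0 < lam) : lam * (lam ^ (-(1 : ℝ) / 2)) ^ 2 = 1 := by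
  rw [← rpow_natCast, ← rpow_mul hlam.le]
  norm_num [rpow_neg_one, hlam.ne']

theorem bruning_zeros_and_inner_radius_upper_bound_general {n : ℕ}
    {ψ : EuclideanSpace ℝ (Fin n) → ℝ} {lam : ℝ} (hlam : 0 < lam) (hψ : ContDiff ℝ 2 ψ)
    (heigen : ∀ x, lap n ψ x = -lam * ψ x) :
    (∀ c, ∃ z ∈ ball c ((n + 3) * lam ^ (-(1 : ℝ) / 2)), ψ z = 0) ∧
      ∀ Ω, IsNodalDomain ψ Ω → innerRadius Ω ≤ (n + 3) * lam ^ (-(1 : ℝ) / 2) := by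
  have hlamR : ((n : ℝ) + 2) ^ 2 < 2 * (lam * ((n + 2) * lam ^ (-(1 : ℝ) / 2)) ^ 2) := by
    rw [mul_pow, mul_left_comm lam, mul_rpow_neg_half_sq hlam]
    have : 0 < ((n : ℝ) + 2) ^ 2 := by positivity
    linarith
  have hzero (c) : ∃ z ∈ ball c ((n + 3) * lam ^ (-(1 : ℝ) / 2)), ψ z = 0 := by
    obtain ⟨z, hz, hψz⟩ := exists_zero_mem_closedBall (c := c)
      (R := (n + 2) * lam ^ (-(1 : ℝ) / 2)) (by positivity) (by simpa using hlamR)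
      hψ.continuous.continuousOn (fun _ _ ↦ hψ.contDiffAt)
      fun x _ ↦ lap_eq_laplacian hψ.contDiffAt ▸ heigen x
    exact ⟨z, closedBall_subset_ball (by gcongr; norm_num) hz, hψz⟩
  refine ⟨hzero, ?_⟩
  rintro _ ⟨x, -, rfl⟩
  refine innerRadius_le fun c hc ↦ ?_
  obtain ⟨z, hz, hψz⟩ := hzero c
  exact connectedComponentIn_subset _ _ (hc hz) hψz

theorem bruning_zeros_and_inner_radius_upper_bound
    (n : ℕ) (hn : 1 ≤ n) :
    ∃ a₂ : ℝ, 0 < a₂ ∧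
      ∀ (ψ : EuclideanSpace ℝ (Fin n) → ℝ) (lam : ℝ),
        1 ≤ lam → ContDiff ℝ (⊤ : ℕ∞) ψ → ZnPeriodic n ψ →
        (∀ x, lap n ψ x = -lam * ψ x) → (∃ x, ψ x ≠ 0) →
        (∀ c : EuclideanSpace ℝ (Fin n),
          ∃ z ∈ Metric.ball c (a₂ * lam ^ (-(1:ℝ)/2)), ψ z = 0) ∧
        (∀ Ω, IsNodalDomain ψ Ω → innerRadius Ω ≤ a₂ * lam ^ (-(1:ℝ)/2)) := by
  refine ⟨n + 3, by positivity, fun ψ lam hlam hψ _ heigen _ ↦ ?_⟩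
  exact bruning_zeros_and_inner_radius_upper_bound_general (zero_lt_one.trans_le hlam)
    (hψ.of_le (WithTop.coe_le_coe.2 le_top)) heigen
end
end

section
/- Let n ≥ 1 and K₂ ≥ K₁ > 0. There exist constants c > 0 and r₀ > 0, depending only on n, K₁, K₂, such that for every smooth ℤⁿ-periodic real-valued eigenfunction ψ : ℝⁿ → ℝ of the Euclidean Laplacian with eigenvalue λ ≥ 1 and every r ∈ [λ^{-1/2}, r₀]: if K₁ rⁿ ≤ ∫_{B_r(x)} ψ² dx ≤ K₂ rⁿ for all x ∈ ℝⁿ, then for every x ∈ ℝⁿ and every 0 < s < 10r one has log( sup_{B_{2s}(x)} ψ² / sup_{B_s(x)} ψ² ) ≤ c · r · √λ. -/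
open MeasureTheory Metric Filter Real

noncomputable section

/-!
An eigenfunction `ψ` of the torus is a sum of plane waves with frequencies on one sphere
`‖w‖² = lam`. Averaging a product of two plane waves against a Gaussian of variance `t` multiplies
it by `exp (-t ‖w - w'‖² / 2) = exp (-lam t) * exp (t ⟪w, w'⟫)`, so `exp (lam t)` times the
Gaussian mean of `ψ²` at `x` is a power series in `t`, whose coefficients are nonnegative because
entrywise powers of a Gram matrix are positive semidefinite (Schur product theorem). Such a series
is log-convex in `log t`: its growth from `t` to `2 t` is controlled by its growth at any larger
scale. The `L²` bounds on balls of radius `r` control that growth at `t = r / √lam`, with exponent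
`O(r √lam)`, hence at all smaller scales. Finally, at variance `t ≈ s² / (r √lam)` the Gaussian
tails outside a ball of radius `s` are beaten by this doubling, so Gaussian means can be exchanged
for suprema over balls.
-/

section PlaneWave

variable {E : Type*} [NormedAddCommGroup E] [InnerProductSpace ℝ E]

/-- The plane wave `x ↦ exp (i⟪w, x⟫)` with angular frequency `w`. -/
def planeWave (w x : E) : ℂ := Complex.exp (inner ℝ w x * Complex.I)

/-- `ψ` is a finite superposition of plane waves whose angular frequencies lie on the sphere
`‖w‖² = lam`; these are the almost periodic solutions of `Δψ = -lam ψ` with finite spectrum, and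
include the eigenfunctions of flat tori. -/
def IsPlaneWaveSum (ψ : E → ℝ) (lam : ℝ) : Prop :=
  ∃ (ι : Type) (_ : Fintype ι) (w : ι → E) (a : ι → ℂ),
    (∀ i, ‖w i‖ ^ 2 = lam) ∧ ∀ x, (ψ x : ℂ) = ∑ i, a i * planeWave (w i) x

lemma norm_planeWave (w x : E) : ‖planeWave w x‖ = 1 :=
  Complex.norm_exp_ofReal_mul_I _

lemma planeWave_add_right (w x y : E) :
    planeWave w (x + y) = planeWave w x * planeWave w y := by
  simp only [planeWave, inner_add_right, Complex.ofReal_add, add_mul, Complex.exp_add]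

lemma planeWave_mul_conj (v w x : E) :
    planeWave v x * (starRingEnd ℂ) (planeWave w x) = planeWave (v - w) x := by
  simp only [planeWave, ← Complex.exp_conj, map_mul, Complex.conj_ofReal, Complex.conj_I,
    ← Complex.exp_add, inner_sub_left, Complex.ofReal_sub]
  ring_nf

lemma continuous_planeWave (w : E) : Continuous (planeWave w) := by
  unfold planeWave
  fun_prop

lemma hasDerivAt_planeWave_smul (w v : E) :
    HasDerivAt (fun h : ℝ => planeWave w (h • v)) (inner ℝ w v * Complex.I) 0 := by
  have h := (((hasDerivAt_id (0 : ℝ)).mul_const (inner ℝ w v)).ofReal_comp.mul_const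
    Complex.I).cexp
  simpa only [planeWave, inner_smul_right, id, zero_mul, one_mul, Complex.ofReal_zero,
    Complex.exp_zero] using h

lemma ofReal_sq_eq_sum_planeWave_sub {ι : Type*} [Fintype ι] {w : ι → E} {a : ι → ℂ}
    {ψ : E → ℝ} (hψ : ∀ x, (ψ x : ℂ) = ∑ i, a i * planeWave (w i) x) (y : E) :
    ((ψ y ^ 2 : ℝ) : ℂ) =
      ∑ i, ∑ j, a i * (starRingEnd ℂ) (a j) * planeWave (w i - w j) y := by
  have hsq : ((ψ y ^ 2 : ℝ) : ℂ) = ψ y * (starRingEnd ℂ) (ψ y) := by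
    rw [Complex.conj_ofReal, sq, Complex.ofReal_mul]
  rw [hsq, hψ, map_sum, Finset.sum_mul_sum]
  refine Finset.sum_congr rfl fun i _ => Finset.sum_congr rfl fun j _ => ?_
  rw [map_mul, ← planeWave_mul_conj]
  ring

lemma IsPlaneWaveSum.continuous {ψ : E → ℝ} {lam : ℝ} (h : IsPlaneWaveSum ψ lam) :
    Continuous ψ := by
  obtain ⟨ι, _, w, a, -, hψ⟩ := h
  rw [← Complex.isometry_ofReal.comp_continuous_iff]
  simp only [Function.comp_def, hψ]
  exact continuous_finsetSum _ fun i _ => continuous_const.mul (continuous_planeWave (w i))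

lemma IsPlaneWaveSum.exists_sq_le {ψ : E → ℝ} {lam : ℝ} (h : IsPlaneWaveSum ψ lam) :
    ∃ C, ∀ x, ψ x ^ 2 ≤ C := by
  obtain ⟨ι, _, w, a, -, hψ⟩ := h
  refine ⟨(∑ i, ‖a i‖) ^ 2, fun x => ?_⟩
  have hx : |ψ x| ≤ ∑ i, ‖a i‖ := by
    rw [← Real.norm_eq_abs, ← Complex.norm_real, hψ]
    exact norm_sum_le_of_le _ fun i _ => by rw [norm_mul, norm_planeWave, mul_one]
  rw [← sq_abs]
  exact pow_le_pow_left₀ (abs_nonneg _) hx 2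

lemma IsPlaneWaveSum.bddAbove_range_sq {ψ : E → ℝ} {lam : ℝ} (h : IsPlaneWaveSum ψ lam) :
    BddAbove (Set.range fun x => ψ x ^ 2) :=
  let ⟨C, hC⟩ := h.exists_sq_le
  ⟨C, Set.forall_mem_range.mpr hC⟩

end PlaneWave

section Torus

open UnitAddTorus

variable {d : Type*}

/-- The quotient map `ℝᵈ → ℝᵈ/ℤᵈ`. -/
def toTorus : EuclideanSpace ℝ d →+ UnitAddTorus d where
  toFun x i := (x i : UnitAddCircle)
  map_zero' := rfl
  map_add' _ _ := rfl

@[simp]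
lemma toTorus_apply (x : EuclideanSpace ℝ d) (i : d) : toTorus x i = (x i : UnitAddCircle) := rfl

lemma isOpenQuotientMap_toTorus : IsOpenQuotientMap (toTorus (d := d)) :=
  (IsOpenQuotientMap.piMap fun _ : d => QuotientAddGroup.isOpenQuotientMap_mk).comp
    (PiLp.homeomorph 2 fun _ : d => ℝ).isOpenQuotientMap

lemma toTorus_eq_toTorus_iff {x y : EuclideanSpace ℝ d} :
    toTorus x = toTorus y ↔ ∃ v : d → ℤ, y = WithLp.toLp 2 fun i => x i + (v i : ℝ) := by
  have hcoord : ∀ i, (x i : UnitAddCircle) = y i ↔ ∃ m : ℤ, y i = x i + m := fun i => by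
    rw [eq_comm, ← sub_eq_zero, ← AddCircle.coe_sub, AddCircle.coe_eq_zero_iff]
    simp only [zsmul_eq_mul, mul_one, eq_sub_iff_add_eq', eq_comm (a := y i)]
  simp only [funext_iff, toTorus_apply, hcoord, Classical.skolem, PiLp.ext_iff]

variable [Fintype d]

/-- The angular frequency `2πξ` of the Fourier mode `ξ ∈ ℤᵈ` of the torus. -/
def angularFrequency (ξ : d → ℤ) : EuclideanSpace ℝ d :=
  WithLp.toLp 2 fun i => 2 * π * (ξ i : ℝ)

lemma mFourier_toTorus (ξ : d → ℤ) (x : EuclideanSpace ℝ d) :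
    mFourier ξ (toTorus x) = planeWave (angularFrequency ξ) x := by
  have hphase : ∀ i, fourier (ξ i) (toTorus x i) =
      Complex.exp ((x i * (2 * π * ξ i) : ℝ) * Complex.I) := fun i => by
    rw [toTorus_apply, fourier_coe_apply]
    push_cast
    ring_nf
  simp only [mFourier, ContinuousMap.coe_mk, hphase, ← Complex.exp_sum, ← Finset.sum_mul,
    ← Complex.ofReal_sum]
  rfl

lemma mFourier_apply_add (ξ : d → ℤ) (θ φ : UnitAddTorus d) :
    mFourier ξ (θ + φ) = mFourier ξ θ * mFourier ξ φ := by
  obtain ⟨x, rfl⟩ := isOpenQuotientMap_toTorus.surjective θ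
  obtain ⟨y, rfl⟩ := isOpenQuotientMap_toTorus.surjective φ
  rw [← map_add, mFourier_toTorus, mFourier_toTorus, mFourier_toTorus, planeWave_add_right]

-- `mFourierCoeff` is defined through `AddCircle.haarAddCircle` rather than `volume`.
lemma mFourierCoeff_eq_integral_volume (f : UnitAddTorus d → ℂ) (ξ : d → ℤ) :
    mFourierCoeff f ξ = ∫ θ, mFourier (-ξ) θ * f θ := by
  have hvol : (volume : Measure (UnitAddTorus d)) =
      Measure.pi fun _ => AddCircle.haarAddCircle := by
    rw [volume_pi]
    simp only [AddCircle.volume_eq_smul_haarAddCircle, ENNReal.ofReal_one, one_smul]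
  rw [hvol]
  rfl

lemma mFourierCoeff_comp_add_right (f : UnitAddTorus d → ℂ) (φ : UnitAddTorus d) (ξ : d → ℤ) :
    mFourierCoeff (fun θ => f (θ + φ)) ξ = mFourier ξ φ * mFourierCoeff f ξ := by
  simp only [mFourierCoeff_eq_integral_volume]
  rw [← integral_const_mul,
    ← integral_add_right_eq_self (fun θ => mFourier ξ φ * (mFourier (-ξ) θ * f θ)) φ]
  congr 1 with θ
  have hφ : mFourier ξ φ * mFourier (-ξ) φ = 1 := by
    rw [← mFourier_add, add_neg_cancel, mFourier_zero, ContinuousMap.one_apply]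
  rw [mFourier_apply_add]
  linear_combination (-(mFourier (-ξ) θ * f (θ + φ))) * hφ

lemma hasDerivAt_mFourierCoeff_comp_add_smul {f f' : C(UnitAddTorus d, ℂ)}
    {v : EuclideanSpace ℝ d}
    (hf : ∀ x, HasLineDerivAt ℝ (fun y => f (toTorus y)) (f' (toTorus x)) x v) (ξ : d → ℤ) :
    HasDerivAt (fun h : ℝ => mFourierCoeff (fun θ => f (θ + toTorus (h • v))) ξ)
      (mFourierCoeff f' ξ) 0 := by
  have hint : ∀ (g : C(UnitAddTorus d, ℂ)) (h : ℝ),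
      Integrable fun θ => mFourier (-ξ) θ * g (θ + toTorus (h • v)) := fun g h =>
    Continuous.integrable_of_hasCompactSupport (by fun_prop) (.of_compactSpace _)
  have hline : ∀ θ (h : ℝ), HasDerivAt (fun h => f (θ + toTorus (h • v)))
      (f' (θ + toTorus (h • v))) h := fun θ h => by
    obtain ⟨x, rfl⟩ := isOpenQuotientMap_toTorus.surjective θ
    simp only [← map_add]
    have hx : HasDerivAt (fun u : ℝ => f (toTorus (x + h • v + u • v)))
      (f' (toTorus (x + h • v))) (h - h) := by rw [sub_self]; exact hf _
    simpa only [add_assoc, ← add_smul, add_sub_cancel] using hx.comp_sub_const h h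
  have hderiv := (hasDerivAt_integral_of_dominated_loc_of_deriv_le (𝕜 := ℝ) (x₀ := 0)
    (F := fun h θ => mFourier (-ξ) θ * f (θ + toTorus (h • v)))
    (F' := fun h θ => mFourier (-ξ) θ * f' (θ + toTorus (h • v)))
    (bound := fun _ => ‖f'‖) univ_mem
    (Eventually.of_forall fun h => (hint f h).aestronglyMeasurable)
    (hint f 0) (hint f' 0).aestronglyMeasurable
    (Eventually.of_forall fun θ h _ => ?_) (integrable_const _)
    (Eventually.of_forall fun θ h _ => (hline θ h).const_mul _)).2
  · simpa only [mFourierCoeff_eq_integral_volume, zero_smul, map_zero, add_zero] using hderiv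
  · calc ‖mFourier (-ξ) θ * f' (θ + toTorus (h • v))‖
        ≤ ‖mFourier (-ξ)‖ * ‖f'‖ := norm_mul_le_of_le
          ((mFourier (-ξ)).norm_coe_le_norm _) (f'.norm_coe_le_norm _)
      _ = ‖f'‖ := by rw [mFourier_norm, one_mul]

lemma mFourierCoeff_of_hasLineDerivAt {f f' : C(UnitAddTorus d, ℂ)} {v : EuclideanSpace ℝ d}
    (hf : ∀ x, HasLineDerivAt ℝ (fun y => f (toTorus y)) (f' (toTorus x)) x v) (ξ : d → ℤ) :
    mFourierCoeff f' ξ = inner ℝ (angularFrequency ξ) v * Complex.I * mFourierCoeff f ξ := by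
  refine (hasDerivAt_mFourierCoeff_comp_add_smul hf ξ).unique ?_
  simp only [mFourierCoeff_comp_add_right, mFourier_toTorus]
  exact (hasDerivAt_planeWave_smul _ v).mul_const _

lemma finite_setOf_norm_sq_angularFrequency_eq (lam : ℝ) :
    {ξ : d → ℤ | ‖angularFrequency ξ‖ ^ 2 = lam}.Finite := by
  refine (isCompact_closedBall (0 : d → ℤ) √lam).finite_of_discrete.subset fun ξ hξ => ?_
  have hnorm : ‖angularFrequency ξ‖ = √lam := by
    rw [← (hξ : _ = lam), Real.sqrt_sq (norm_nonneg _)]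
  rw [mem_closedBall_zero_iff, pi_norm_le_iff_of_nonneg (Real.sqrt_nonneg _)]
  intro i
  calc ‖ξ i‖ = |(ξ i : ℝ)| := Int.norm_eq_abs _
    _ ≤ |2 * π * (ξ i : ℝ)| := by
      rw [abs_mul, abs_of_pos Real.two_pi_pos]
      exact le_mul_of_one_le_left (abs_nonneg _) (by linarith [Real.pi_gt_three])
    _ ≤ √lam := hnorm ▸ PiLp.norm_apply_le (angularFrequency ξ) i

end Torus

namespace ZnPeriodic

open UnitAddTorus

variable {n : ℕ} {ψ : EuclideanSpace ℝ (Fin n) → ℝ}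

lemma fderiv_apply (hψ : ZnPeriodic n ψ) (v : EuclideanSpace ℝ (Fin n)) :
    ZnPeriodic n fun y => fderiv ℝ ψ y v := by
  intro x k
  have hshift : (fun y => ψ (y + WithLp.toLp 2 fun i => (k i : ℝ))) = ψ := funext (hψ · k)
  change fderiv ℝ ψ (x + WithLp.toLp 2 fun i => (k i : ℝ)) v = fderiv ℝ ψ x v
  rw [← fderiv_comp_add_right, hshift]

lemma exists_toTorus_lift (hψ : ZnPeriodic n ψ) (hcont : Continuous ψ) :
    ∃ f : C(UnitAddTorus (Fin n), ℂ), ∀ x, f (toTorus x) = ψ x := by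
  let q : C(EuclideanSpace ℝ (Fin n), UnitAddTorus (Fin n)) :=
    ⟨toTorus, isOpenQuotientMap_toTorus.continuous⟩
  have hq : Topology.IsQuotientMap q := isOpenQuotientMap_toTorus.isQuotientMap
  let ψC : C(EuclideanSpace ℝ (Fin n), ℂ) := ⟨fun x => ψ x, by fun_prop⟩
  have hfactors : Function.FactorsThrough ψC q := fun x y hxy => by
    obtain ⟨v, rfl⟩ := toTorus_eq_toTorus_iff.mp hxy
    exact congrArg Complex.ofReal (hψ x v).symm
  exact ⟨hq.lift ψC hfactors, fun x => DFunLike.congr_fun (hq.lift_comp ψC hfactors) x⟩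

lemma exists_toTorus_lift_fderiv (hψ : ZnPeriodic n ψ) (hsmooth : ContDiff ℝ 1 ψ)
    {f : C(UnitAddTorus (Fin n), ℂ)} (hf : ∀ x, f (toTorus x) = ψ x)
    (v : EuclideanSpace ℝ (Fin n)) :
    ∃ f' : C(UnitAddTorus (Fin n), ℂ), (∀ x, f' (toTorus x) = fderiv ℝ ψ x v) ∧
      ∀ ξ, mFourierCoeff f' ξ =
        inner ℝ (angularFrequency ξ) v * Complex.I * mFourierCoeff f ξ := by
  obtain ⟨f', hf'⟩ := (hψ.fderiv_apply v).exists_toTorus_lift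
    ((hsmooth.continuous_fderiv one_ne_zero).clm_apply continuous_const)
  refine ⟨f', hf', mFourierCoeff_of_hasLineDerivAt fun x => ?_⟩
  simp only [hf, hf']
  exact (((hsmooth.differentiable one_ne_zero) x).hasFDerivAt.hasLineDerivAt v).ofReal_comp

lemma norm_sq_angularFrequency_eq (hψ : ZnPeriodic n ψ) (hsmooth : ContDiff ℝ 2 ψ) {lam : ℝ}
    (hlap : ∀ x, lap n ψ x = -lam * ψ x) {f : C(UnitAddTorus (Fin n), ℂ)}
    (hf : ∀ x, f (toTorus x) = ψ x) {ξ : Fin n → ℤ} (hξ : mFourierCoeff f ξ ≠ 0) :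
    ‖angularFrequency ξ‖ ^ 2 = lam := by
  let e : Fin n → EuclideanSpace ℝ (Fin n) := fun i => EuclideanSpace.single i 1
  have hsmooth' : ∀ i, ContDiff ℝ 1 fun y => fderiv ℝ ψ y (e i) := fun i =>
    (hsmooth.fderiv_right (m := 1) (by norm_num)).clm_apply contDiff_const
  choose f' hf' hcoeff' using fun i =>
    hψ.exists_toTorus_lift_fderiv (hsmooth.of_le one_le_two) hf (e i)
  choose f'' hf'' hcoeff'' using fun i =>
    (hψ.fderiv_apply (e i)).exists_toTorus_lift_fderiv (hsmooth' i) (hf' i) (e i)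
  have hlap_torus : ∀ θ, ∑ i, f'' i θ = -lam * f θ := fun θ => by
    obtain ⟨x, rfl⟩ := isOpenQuotientMap_toTorus.surjective θ
    simp only [hf, hf'']
    exact_mod_cast hlap x
  have hcoeff_lap : ∑ i, mFourierCoeff (f'' i) ξ = -lam * mFourierCoeff f ξ := by
    simp only [mFourierCoeff_eq_integral_volume]
    rw [← integral_finsetSum, ← integral_const_mul]
    · simp only [← Finset.mul_sum, hlap_torus, mul_left_comm]
    · intro i _
      exact Continuous.integrable_of_hasCompactSupport (by fun_prop) (.of_compactSpace _)
  have hmul : (‖angularFrequency ξ‖ ^ 2 : ℝ) * mFourierCoeff f ξ = lam * mFourierCoeff f ξ := by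
    have hsymbol : ∀ i, mFourierCoeff (f'' i) ξ =
        -((angularFrequency ξ i ^ 2 : ℝ) * mFourierCoeff f ξ) := fun i => by
      simp only [hcoeff'', hcoeff', e, EuclideanSpace.inner_single_right, one_mul,
        conj_trivial]
      push_cast
      linear_combination (angularFrequency ξ i : ℂ) ^ 2 * mFourierCoeff f ξ * Complex.I_sq
    simp only [hsymbol, Finset.sum_neg_distrib, ← Finset.sum_mul, ← Complex.ofReal_sum,
      ← EuclideanSpace.real_norm_sq_eq] at hcoeff_lap
    linear_combination -hcoeff_lap
  exact_mod_cast mul_right_cancel₀ hξ hmul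

theorem isPlaneWaveSum (hψ : ZnPeriodic n ψ) (hsmooth : ContDiff ℝ 2 ψ) {lam : ℝ}
    (hlap : ∀ x, lap n ψ x = -lam * ψ x) : IsPlaneWaveSum ψ lam := by
  obtain ⟨f, hf⟩ := hψ.exists_toTorus_lift hsmooth.continuous
  have hfin := finite_setOf_norm_sq_angularFrequency_eq (d := Fin n) lam
  have hzero : ∀ ξ ∉ hfin.toFinset, mFourierCoeff f ξ = 0 := fun ξ hξ => by
    contrapose! hξ
    exact hfin.mem_toFinset.mpr (hψ.norm_sq_angularFrequency_eq hsmooth hlap hf hξ)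
  refine ⟨hfin.toFinset, inferInstance, fun ξ => angularFrequency ξ, fun ξ => mFourierCoeff f ξ,
    fun ξ => hfin.mem_toFinset.mp ξ.2, fun x => ?_⟩
  have hseries := hasSum_mFourier_series_apply_of_summable
    (summable_of_ne_finset_zero (s := hfin.toFinset) hzero) (toTorus x)
  simp only [hf, smul_eq_mul, mFourier_toTorus] at hseries
  rw [hseries.unique (hasSum_sum_of_ne_finset_zero fun ξ hξ => by rw [hzero ξ hξ, zero_mul])]
  exact (Finset.sum_coe_sort hfin.toFinset
    fun ξ => mFourierCoeff f ξ * planeWave (angularFrequency ξ) x).symm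

end ZnPeriodic

section GaussianKernel

variable {E : Type*} [NormedAddCommGroup E] [InnerProductSpace ℝ E]

/-- The density of the centred Gaussian with covariance `t • id`, i.e. the heat kernel at time
`t / 2`. -/
def gaussianKernel (t : ℝ) (x : E) : ℝ :=
  (2 * π * t) ^ (-(Module.finrank ℝ E / 2 : ℝ)) * exp (-‖x‖ ^ 2 / (2 * t))

variable {t : ℝ}

lemma gaussianKernel_pos (ht : 0 < t) (x : E) : 0 < gaussianKernel t x := by
  unfold gaussianKernel
  positivity

lemma gaussianKernel_le (ht : 0 < t) (x : E) :
    gaussianKernel t x ≤ (2 * π * t) ^ (-(Module.finrank ℝ E / 2 : ℝ)) := by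
  refine mul_le_of_le_one_right (by positivity) (Real.exp_le_one_iff.mpr ?_)
  rw [neg_div]
  exact neg_nonpos.mpr (by positivity)

lemma le_gaussianKernel (ht : 0 < t) {r : ℝ} {x : E} (hx : ‖x‖ ≤ r) :
    (2 * π * t) ^ (-(Module.finrank ℝ E / 2 : ℝ)) * exp (-r ^ 2 / (2 * t)) ≤
      gaussianKernel t x := by
  unfold gaussianKernel
  gcongr

lemma gaussianKernel_eq_mul_two_mul (ht : 0 < t) (x y : E) :
    gaussianKernel t x = 2 ^ (Module.finrank ℝ E / 2 : ℝ) *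
      exp ((‖y‖ ^ 2 - 2 * ‖x‖ ^ 2) / (4 * t)) * gaussianKernel (2 * t) y := by
  have hnormalization : (2 * π * (2 * t)) ^ (-(Module.finrank ℝ E / 2 : ℝ)) =
      (2 ^ (Module.finrank ℝ E / 2 : ℝ))⁻¹ * (2 * π * t) ^ (-(Module.finrank ℝ E / 2 : ℝ)) := by
    rw [mul_left_comm, Real.mul_rpow zero_le_two (by positivity), Real.rpow_neg zero_le_two]
  have hexp : exp (-‖x‖ ^ 2 / (2 * t)) =
      exp ((‖y‖ ^ 2 - 2 * ‖x‖ ^ 2) / (4 * t)) * exp (-‖y‖ ^ 2 / (2 * (2 * t))) := by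
    rw [← Real.exp_add]
    congr 1
    field_simp
    ring
  rw [gaussianKernel, gaussianKernel, hnormalization, hexp]
  field_simp

lemma gaussianKernel_le_of_le_norm (ht : 0 < t) {s : ℝ} (hs : 0 ≤ s) {x : E} (hx : s ≤ ‖x‖) :
    gaussianKernel t x ≤ 2 ^ (Module.finrank ℝ E / 2 : ℝ) * exp (-s ^ 2 / (4 * t)) *
      gaussianKernel (2 * t) x := by
  have hsq : s ^ 2 ≤ ‖x‖ ^ 2 := by gcongr
  have := gaussianKernel_pos (mul_pos two_pos ht) x
  rw [gaussianKernel_eq_mul_two_mul ht x x]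
  gcongr
  linarith

lemma gaussianKernel_le_of_norm_sub_le (ht : 0 < t) {ρ : ℝ} {x y : E} (hxy : ‖y - x‖ ≤ ρ) :
    gaussianKernel t x ≤ 2 ^ (Module.finrank ℝ E / 2 : ℝ) * exp (ρ ^ 2 / (2 * t)) *
      gaussianKernel (2 * t) y := by
  have hsq : ‖y‖ ^ 2 ≤ 2 * ‖x‖ ^ 2 + 2 * ρ ^ 2 := by
    have hy : ‖y‖ ≤ ‖x‖ + ρ := (norm_le_norm_add_norm_sub' y x).trans (by gcongr)
    nlinarith [norm_nonneg y, sq_nonneg (‖x‖ - ρ)]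
  have := gaussianKernel_pos (mul_pos two_pos ht) y
  rw [gaussianKernel_eq_mul_two_mul ht x y]
  gcongr _ * exp ?_ * _
  rw [div_le_div_iff₀ (by positivity) (by positivity)]
  nlinarith

lemma ofReal_gaussianKernel_mul_planeWave (t : ℝ) (w x : E) :
    (gaussianKernel t x : ℂ) * planeWave w x =
      ((2 * π * t) ^ (-(Module.finrank ℝ E / 2 : ℝ)) : ℝ) *
        Complex.exp (-(1 / (2 * t) : ℝ) * ‖x‖ ^ 2 + Complex.I * inner ℝ w x) := by
  rw [gaussianKernel, planeWave, Complex.ofReal_mul, mul_assoc, Complex.ofReal_exp,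
    ← Complex.exp_add]
  push_cast
  ring_nf

variable [MeasurableSpace E] [BorelSpace E] [FiniteDimensional ℝ E]

lemma integrable_gaussianKernel_mul_planeWave (ht : 0 < t) (w : E) :
    Integrable fun x => (gaussianKernel t x : ℂ) * planeWave w x := by
  simp only [ofReal_gaussianKernel_mul_planeWave]
  refine (GaussianFourier.integrable_cexp_neg_mul_sq_norm_add ?_ _ _).const_mul _
  rw [Complex.ofReal_re]
  positivity

lemma integral_gaussianKernel_mul_planeWave (ht : 0 < t) (w : E) :
    ∫ x, (gaussianKernel t x : ℂ) * planeWave w x = (exp (-t * ‖w‖ ^ 2 / 2) : ℝ) := by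
  have hb : 0 < ((1 / (2 * t) : ℝ) : ℂ).re := by rw [Complex.ofReal_re]; positivity
  have hscale : (π : ℂ) / (1 / (2 * t) : ℝ) = (2 * π * t : ℝ) := by push_cast; field_simp
  have hcpow : ((Module.finrank ℝ E : ℂ) / 2) = ((Module.finrank ℝ E / 2 : ℝ) : ℂ) := by
    push_cast; rfl
  simp only [ofReal_gaussianKernel_mul_planeWave]
  rw [integral_const_mul, GaussianFourier.integral_cexp_neg_mul_sq_norm_add hb, hscale, hcpow,
    ← Complex.ofReal_cpow (by positivity), ← mul_assoc, ← Complex.ofReal_mul,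
    ← Real.rpow_add (by positivity), neg_add_cancel, Real.rpow_zero, Complex.ofReal_one, one_mul,
    Complex.I_sq]
  push_cast
  congr 1
  field_simp
  ring

lemma integrable_gaussianKernel (ht : 0 < t) : Integrable (gaussianKernel t : E → ℝ) := by
  have h := integrable_gaussianKernel_mul_planeWave ht (0 : E)
  simp only [planeWave, inner_zero_left, Complex.ofReal_zero, zero_mul, Complex.exp_zero,
    mul_one] at h
  exact_mod_cast h.re

lemma integral_gaussianKernel (ht : 0 < t) : ∫ x : E, gaussianKernel t x = 1 := by
  have h := integral_gaussianKernel_mul_planeWave ht (0 : E)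
  simp only [planeWave, inner_zero_left, Complex.ofReal_zero, zero_mul, Complex.exp_zero,
    mul_one, norm_zero, zero_pow two_ne_zero, mul_zero, zero_div, Real.exp_zero] at h
  exact_mod_cast h

lemma integrable_gaussianKernel_sub_mul_planeWave (ht : 0 < t) (w x : E) :
    Integrable fun z => (gaussianKernel t (z - x) : ℂ) * planeWave w z := by
  refine (((integrable_gaussianKernel_mul_planeWave ht w).comp_sub_right x).const_mul
    (planeWave w x)).congr (Eventually.of_forall fun z => ?_)
  dsimp only
  rw [mul_left_comm, ← planeWave_add_right, add_sub_cancel]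

lemma integral_gaussianKernel_sub_mul_planeWave (ht : 0 < t) (w x : E) :
    ∫ z, (gaussianKernel t (z - x) : ℂ) * planeWave w z =
      planeWave w x * (exp (-t * ‖w‖ ^ 2 / 2) : ℝ) := by
  rw [← integral_gaussianKernel_mul_planeWave ht, ← integral_const_mul,
    ← integral_sub_right_eq_self (fun z => planeWave w x * (gaussianKernel t z * planeWave w z)) x]
  congr 1 with z
  rw [mul_left_comm, ← planeWave_add_right, add_sub_cancel]

end GaussianKernel

section GaussianMean

variable {E : Type*} [NormedAddCommGroup E] [InnerProductSpace ℝ E] [MeasurableSpace E]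
  [BorelSpace E] [FiniteDimensional ℝ E]

/-- The mean of `f` against the Gaussian centred at `x` with covariance `t • id`. -/
def gaussianMean (f : E → ℝ) (x : E) (t : ℝ) : ℝ :=
  ∫ z, gaussianKernel t (z - x) * f z

variable {f : E → ℝ} {t P : ℝ}

lemma gaussianMean_nonneg (hf0 : 0 ≤ f) (ht : 0 < t) (x : E) : 0 ≤ gaussianMean f x t :=
  integral_nonneg fun z => mul_nonneg (gaussianKernel_pos ht _).le (hf0 z)

lemma gaussianMean_const (ht : 0 < t) (x : E) (c : ℝ) : gaussianMean (fun _ => c) x t = c := by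
  rw [gaussianMean, integral_mul_const, integral_sub_right_eq_self (gaussianKernel t),
    integral_gaussianKernel ht, one_mul]

lemma integrable_gaussianKernel_sub_mul (hf : AEStronglyMeasurable f) (hf0 : 0 ≤ f)
    (hfP : ∀ y, f y ≤ P) (ht : 0 < t) (x : E) :
    Integrable fun z => gaussianKernel t (z - x) * f z :=
  ((integrable_gaussianKernel ht).comp_sub_right x).mul_bdd hf
    (Eventually.of_forall fun z => (Real.norm_of_nonneg (hf0 z)).trans_le (hfP z))

lemma gaussianMean_le (hf : AEStronglyMeasurable f) (hf0 : 0 ≤ f) (hfP : ∀ y, f y ≤ P)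
    (ht : 0 < t) (x : E) : gaussianMean f x t ≤ P := by
  have hP0 : 0 ≤ P := (hf0 x).trans (hfP x)
  calc gaussianMean f x t ≤ gaussianMean (fun _ => P) x t := by
        refine integral_mono (integrable_gaussianKernel_sub_mul hf hf0 hfP ht x)
          (integrable_gaussianKernel_sub_mul aestronglyMeasurable_const (fun _ => hP0)
            (fun _ => le_rfl) ht x) fun z => ?_
        exact mul_le_mul_of_nonneg_left (hfP z) (gaussianKernel_pos ht _).le
    _ = P := gaussianMean_const ht x P

lemma gaussianMean_le_of_dist_le (hf : AEStronglyMeasurable f) (hf0 : 0 ≤ f)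
    (hfP : ∀ y, f y ≤ P) (ht : 0 < t) {x y : E} {ρ : ℝ} (hxy : dist x y ≤ ρ) :
    gaussianMean f x t ≤
      2 ^ (Module.finrank ℝ E / 2 : ℝ) * exp (ρ ^ 2 / (2 * t)) * gaussianMean f y (2 * t) := by
  rw [gaussianMean, gaussianMean, ← integral_const_mul]
  refine integral_mono (integrable_gaussianKernel_sub_mul hf hf0 hfP ht x)
    ((integrable_gaussianKernel_sub_mul hf hf0 hfP (by positivity) y).const_mul _) fun z => ?_
  dsimp only
  rw [← mul_assoc]
  refine mul_le_mul_of_nonneg_right (gaussianKernel_le_of_norm_sub_le ht ?_) (hf0 z)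
  rwa [sub_sub_sub_cancel_left, ← dist_eq_norm]

lemma gaussianMean_le_setIntegral_add (hf : AEStronglyMeasurable f) (hf0 : 0 ≤ f)
    (hfP : ∀ y, f y ≤ P) (ht : 0 < t) (x : E) {s : ℝ} (hs : 0 ≤ s) :
    gaussianMean f x t ≤ (∫ z in ball x s, gaussianKernel t (z - x) * f z) +
      2 ^ (Module.finrank ℝ E / 2 : ℝ) * exp (-s ^ 2 / (4 * t)) * gaussianMean f x (2 * t) := by
  have hint := integrable_gaussianKernel_sub_mul hf hf0 hfP ht x
  have hint' := (integrable_gaussianKernel_sub_mul hf hf0 hfP (mul_pos two_pos ht) x).const_mul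
    (2 ^ (Module.finrank ℝ E / 2 : ℝ) * exp (-s ^ 2 / (4 * t)))
  rw [gaussianMean, ← integral_add_compl measurableSet_ball hint, gaussianMean,
    ← integral_const_mul]
  gcongr
  calc ∫ z in (ball x s)ᶜ, gaussianKernel t (z - x) * f z
      ≤ ∫ z in (ball x s)ᶜ, 2 ^ (Module.finrank ℝ E / 2 : ℝ) * exp (-s ^ 2 / (4 * t)) *
          (gaussianKernel (2 * t) (z - x) * f z) := by
        refine setIntegral_mono_on hint.integrableOn hint'.integrableOn measurableSet_ball.compl
          fun z hz => ?_
        rw [← mul_assoc]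
        refine mul_le_mul_of_nonneg_right (gaussianKernel_le_of_le_norm ht hs ?_) (hf0 z)
        rwa [← dist_eq_norm, ← not_lt]
    _ ≤ _ := by
        refine setIntegral_le_integral hint' (Eventually.of_forall fun z => ?_)
        have := gaussianKernel_pos (mul_pos two_pos ht) (z - x)
        have := hf0 z
        dsimp at this ⊢
        positivity

lemma gaussianMean_le_add_of_le_on_ball (hf : AEStronglyMeasurable f) (hf0 : 0 ≤ f)
    (hfP : ∀ y, f y ≤ P) (ht : 0 < t) {x : E} {s A : ℝ} (hs : 0 < s)
    (hfA : ∀ y ∈ ball x s, f y ≤ A) :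
    gaussianMean f x t ≤ A +
      2 ^ (Module.finrank ℝ E / 2 : ℝ) * exp (-s ^ 2 / (4 * t)) * gaussianMean f x (2 * t) := by
  have hA0 : 0 ≤ A := (hf0 x).trans (hfA x (mem_ball_self hs))
  have hint : Integrable fun z => gaussianKernel t (z - x) * A :=
    ((integrable_gaussianKernel ht).comp_sub_right x).mul_const A
  refine (gaussianMean_le_setIntegral_add hf hf0 hfP ht x hs.le).trans ?_
  gcongr
  calc ∫ z in ball x s, gaussianKernel t (z - x) * f z
      ≤ ∫ z in ball x s, gaussianKernel t (z - x) * A :=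
        setIntegral_mono_on (integrable_gaussianKernel_sub_mul hf hf0 hfP ht x).integrableOn
          hint.integrableOn measurableSet_ball fun z hz =>
          mul_le_mul_of_nonneg_left (hfA z hz) (gaussianKernel_pos ht _).le
    _ ≤ gaussianMean (fun _ => A) x t := setIntegral_le_integral hint
        (Eventually.of_forall fun z => mul_nonneg (gaussianKernel_pos ht _).le hA0)
    _ = A := gaussianMean_const ht x A

lemma integrableOn_ball_of_le (hf : AEStronglyMeasurable f) (hf0 : 0 ≤ f) (hfP : ∀ y, f y ≤ P)
    (x : E) (r : ℝ) : IntegrableOn f (ball x r) :=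
  Measure.integrableOn_of_bounded measure_ball_lt_top.ne hf
    (Eventually.of_forall fun z => (Real.norm_of_nonneg (hf0 z)).trans_le (hfP z))

lemma gaussianMean_le_setIntegral_add_bound (hf : AEStronglyMeasurable f) (hf0 : 0 ≤ f)
    (hfP : ∀ y, f y ≤ P) (ht : 0 < t) (x : E) {r : ℝ} (hr : 0 ≤ r) :
    gaussianMean f x t ≤
      (2 * π * t) ^ (-(Module.finrank ℝ E / 2 : ℝ)) * (∫ z in ball x r, f z) +
        2 ^ (Module.finrank ℝ E / 2 : ℝ) * exp (-r ^ 2 / (4 * t)) * P := by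
  refine (gaussianMean_le_setIntegral_add hf hf0 hfP ht x hr).trans ?_
  gcongr
  · rw [← integral_const_mul]
    refine setIntegral_mono_on (integrable_gaussianKernel_sub_mul hf hf0 hfP ht x).integrableOn
      ((integrableOn_ball_of_le hf hf0 hfP x r).const_mul _) measurableSet_ball fun z _ => ?_
    exact mul_le_mul_of_nonneg_right (gaussianKernel_le ht _) (hf0 z)
  · exact gaussianMean_le hf hf0 hfP (by positivity) x

lemma mul_setIntegral_le_gaussianMean (hf : AEStronglyMeasurable f) (hf0 : 0 ≤ f)
    (hfP : ∀ y, f y ≤ P) (ht : 0 < t) (x : E) (r : ℝ) :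
    (2 * π * t) ^ (-(Module.finrank ℝ E / 2 : ℝ)) * exp (-r ^ 2 / (2 * t)) *
      (∫ z in ball x r, f z) ≤ gaussianMean f x t := by
  have hint := integrable_gaussianKernel_sub_mul hf hf0 hfP ht x
  rw [← integral_const_mul]
  calc ∫ z in ball x r, (2 * π * t) ^ (-(Module.finrank ℝ E / 2 : ℝ)) * exp (-r ^ 2 / (2 * t)) * f z
      ≤ ∫ z in ball x r, gaussianKernel t (z - x) * f z := by
        refine setIntegral_mono_on ((integrableOn_ball_of_le hf hf0 hfP x r).const_mul _)
          hint.integrableOn measurableSet_ball fun z hz => ?_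
        refine mul_le_mul_of_nonneg_right (le_gaussianKernel ht ?_) (hf0 z)
        exact dist_eq_norm z x ▸ (mem_ball.mp hz).le
    _ ≤ gaussianMean f x t := setIntegral_le_integral hint
        (Eventually.of_forall fun z => mul_nonneg (gaussianKernel_pos ht _).le (hf0 z))

end GaussianMean

section PowerSeries

lemma posSemidef_of_pow {ι : Type*} [Finite ι] {G : Matrix ι ι ℝ} (hG : G.PosSemidef) (k : ℕ) :
    (Matrix.of fun i j => G i j ^ k).PosSemidef := by
  induction k with
  | zero =>
    convert Matrix.posSemidef_vecMulVec_self_star (fun _ : ι => (1 : ℝ)) using 1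
    ext i j
    simp [Matrix.vecMulVec_apply]
  | succ k ih =>
    have hsucc : (Matrix.of fun i j => G i j ^ (k + 1)) =
        Matrix.hadamard (Matrix.of fun i j => G i j ^ k) G := by
      ext i j
      simp only [Matrix.of_apply, Matrix.hadamard_apply, pow_succ]
    exact hsucc ▸ ih.hadamard hG

lemma sum_re_mul_conj_mul_nonneg {ι : Type*} [Fintype ι] {G : Matrix ι ι ℝ}
    (hG : G.PosSemidef) (c : ι → ℂ) :
    0 ≤ ∑ i, ∑ j, (c i * (starRingEnd ℂ) (c j)).re * G i j := by
  have hre := hG.dotProduct_mulVec_nonneg fun i => (c i).re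
  have him := hG.dotProduct_mulVec_nonneg fun i => (c i).im
  refine (add_nonneg hre him).trans_eq ?_
  simp only [dotProduct, Matrix.mulVec, Finset.mul_sum, ← Finset.sum_add_distrib, Complex.mul_re,
    Complex.conj_re, Complex.conj_im, Pi.star_apply, star_trivial]
  refine Finset.sum_congr rfl fun i _ => Finset.sum_congr rfl fun j _ => ?_
  ring

lemma sum_mul_pow_mul_sum_pow_le {Q : ℕ → ℝ} (hQ : ∀ k, 0 ≤ Q k) {c t T : ℝ} (hc : 1 ≤ c)
    (ht : 0 ≤ t) (htT : t ≤ T) (m : ℕ) :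
    (∑ k ∈ Finset.range m, Q k * (c * t) ^ k) * (∑ k ∈ Finset.range m, Q k * T ^ k) ≤
      (∑ k ∈ Finset.range m, Q k * t ^ k) * (∑ k ∈ Finset.range m, Q k * (c * T) ^ k) := by
  have hT : 0 ≤ T := ht.trans htT
  have hpair : ∀ j k, 0 ≤ (c ^ k - c ^ j) * (t ^ j * T ^ k - t ^ k * T ^ j) := fun j k => by
    wlog hjk : j ≤ k generalizing j k
    · exact (this k j (le_of_not_ge hjk)).trans_eq (by ring)
    obtain ⟨d, rfl⟩ := Nat.exists_eq_add_of_le hjk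
    refine mul_nonneg (sub_nonneg.mpr (pow_le_pow_right₀ hc hjk)) (sub_nonneg.mpr ?_)
    calc t ^ (j + d) * T ^ j = t ^ j * (t ^ d * T ^ j) := by ring
      _ ≤ t ^ j * (T ^ d * T ^ j) := by gcongr
      _ = t ^ j * T ^ (j + d) := by ring
  have hsymm : 0 ≤ ∑ j ∈ Finset.range m, ∑ k ∈ Finset.range m,
      Q j * Q k * ((c ^ k - c ^ j) * (t ^ j * T ^ k - t ^ k * T ^ j)) :=
    Finset.sum_nonneg fun j _ => Finset.sum_nonneg fun k _ =>
      mul_nonneg (mul_nonneg (hQ j) (hQ k)) (hpair j k)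
  have hexpand : ∑ j ∈ Finset.range m, ∑ k ∈ Finset.range m,
      Q j * Q k * ((c ^ k - c ^ j) * (t ^ j * T ^ k - t ^ k * T ^ j)) =
      (∑ k ∈ Finset.range m, Q k * t ^ k) * (∑ k ∈ Finset.range m, Q k * (c * T) ^ k) +
      (∑ k ∈ Finset.range m, Q k * (c * T) ^ k) * (∑ k ∈ Finset.range m, Q k * t ^ k) -
      ((∑ k ∈ Finset.range m, Q k * (c * t) ^ k) * (∑ k ∈ Finset.range m, Q k * T ^ k) +
      (∑ k ∈ Finset.range m, Q k * T ^ k) * (∑ k ∈ Finset.range m, Q k * (c * t) ^ k)) := by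
    simp only [Finset.sum_mul_sum, ← Finset.sum_sub_distrib, ← Finset.sum_add_distrib]
    refine Finset.sum_congr rfl fun j _ => Finset.sum_congr rfl fun k _ => ?_
    ring
  linarith

lemma mul_le_mul_of_hasSum_pow {Q : ℕ → ℝ} (hQ : ∀ k, 0 ≤ Q k) {H : ℝ → ℝ}
    (hH : ∀ t, 0 < t → HasSum (fun k => Q k * t ^ k) (H t)) {c t T : ℝ} (hc : 1 ≤ c)
    (ht : 0 < t) (htT : t ≤ T) :
    H (c * t) * H T ≤ H t * H (c * T) := by
  have hc0 : 0 < c := one_pos.trans_le hc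
  have hT : 0 < T := ht.trans_le htT
  exact le_of_tendsto_of_tendsto'
    ((hH _ (mul_pos hc0 ht)).tendsto_sum_nat.mul (hH T hT).tendsto_sum_nat)
    ((hH t ht).tendsto_sum_nat.mul (hH _ (mul_pos hc0 hT)).tendsto_sum_nat)
    (sum_mul_pow_mul_sum_pow_le hQ hc ht.le htT)

variable {E : Type*} [NormedAddCommGroup E] [InnerProductSpace ℝ E] [MeasurableSpace E]
  [BorelSpace E] [FiniteDimensional ℝ E] {ψ : E → ℝ} {lam : ℝ}

lemma ofReal_gaussianMean_sq_eq {ι : Type*} [Fintype ι] {w : ι → E} {a : ι → ℂ}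
    (hψ : ∀ x, (ψ x : ℂ) = ∑ i, a i * planeWave (w i) x) {t : ℝ} (ht : 0 < t) (x : E) :
    (gaussianMean (fun y => ψ y ^ 2) x t : ℂ) = ∑ i, ∑ j, a i * (starRingEnd ℂ) (a j) *
      (planeWave (w i - w j) x * (exp (-t * ‖w i - w j‖ ^ 2 / 2) : ℝ)) := by
  have hint : ∀ i j, Integrable fun z =>
      a i * (starRingEnd ℂ) (a j) * (gaussianKernel t (z - x) * planeWave (w i - w j) z) :=
    fun i j => (integrable_gaussianKernel_sub_mul_planeWave ht _ x).const_mul _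
  simp only [gaussianMean, ← integral_complex_ofReal, Complex.ofReal_mul,
    ofReal_sq_eq_sum_planeWave_sub hψ, Finset.mul_sum, mul_left_comm (gaussianKernel t _ : ℂ)]
  rw [integral_finsetSum _ fun i _ => integrable_finsetSum _ fun j _ => hint i j]
  refine Finset.sum_congr rfl fun i _ => ?_
  rw [integral_finsetSum _ fun j _ => hint i j]
  simp only [integral_const_mul, integral_gaussianKernel_sub_mul_planeWave ht]

lemma exp_mul_gaussianMean_sq_eq {ι : Type*} [Fintype ι] {w : ι → E} {a : ι → ℂ}
    (hw : ∀ i, ‖w i‖ ^ 2 = lam) (hψ : ∀ x, (ψ x : ℂ) = ∑ i, a i * planeWave (w i) x)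
    {t : ℝ} (ht : 0 < t) (x : E) :
    exp (lam * t) * gaussianMean (fun y => ψ y ^ 2) x t =
      ∑ i, ∑ j, (a i * planeWave (w i) x * (starRingEnd ℂ) (a j * planeWave (w j) x)).re *
        exp (t * inner ℝ (w i) (w j)) := by
  have hexp : ∀ i j, exp (lam * t) * exp (-t * ‖w i - w j‖ ^ 2 / 2) =
      exp (t * inner ℝ (w i) (w j)) := fun i j => by
    rw [← Real.exp_add, norm_sub_sq_real, hw, hw]
    ring_nf
  rw [← Complex.ofReal_re (_ * _), Complex.ofReal_mul, ofReal_gaussianMean_sq_eq hψ ht,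
    Finset.mul_sum, Complex.re_sum]
  refine Finset.sum_congr rfl fun i _ => ?_
  rw [Finset.mul_sum, Complex.re_sum]
  refine Finset.sum_congr rfl fun j _ => ?_
  rw [← Complex.re_mul_ofReal, map_mul, ← hexp, Complex.ofReal_mul, ← planeWave_mul_conj]
  ring_nf

namespace IsPlaneWaveSum

lemma exists_nonneg_hasSum (hψ : IsPlaneWaveSum ψ lam) (x : E) :
    ∃ Q : ℕ → ℝ, (∀ k, 0 ≤ Q k) ∧ Q 0 = ψ x ^ 2 ∧ ∀ t, 0 < t →
      HasSum (fun k => Q k * t ^ k) (exp (lam * t) * gaussianMean (fun y => ψ y ^ 2) x t) := by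
  obtain ⟨ι, _, w, a, hw, hψ⟩ := hψ
  let c : ι → ι → ℝ := fun i j =>
    (a i * planeWave (w i) x * (starRingEnd ℂ) (a j * planeWave (w j) x)).re
  refine ⟨fun k => (∑ i, ∑ j, c i j * inner ℝ (w i) (w j) ^ k) / k.factorial, fun k => ?_, ?_,
    fun t ht => ?_⟩
  · exact div_nonneg (sum_re_mul_conj_mul_nonneg
      (posSemidef_of_pow (Matrix.posSemidef_gram ℝ w) k) _) (Nat.cast_nonneg _)
  · simp only [pow_zero, mul_one, Nat.factorial_zero, Nat.cast_one, div_one, c, ← Complex.re_sum]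
    rw [← Finset.sum_mul_sum, ← map_sum, ← hψ, Complex.conj_ofReal, ← Complex.ofReal_mul,
      Complex.ofReal_re, sq]
  · rw [exp_mul_gaussianMean_sq_eq hw hψ ht x]
    have hexp : ∀ u : ℝ, HasSum (fun k : ℕ => u ^ k / k.factorial) (exp u) := fun u => by
      rw [Real.exp_eq_exp_ℝ]
      exact NormedSpace.expSeries_div_hasSum_exp u
    refine (hasSum_sum fun i _ => hasSum_sum fun j _ =>
      (hexp (t * inner ℝ (w i) (w j))).mul_left (c i j)).congr_fun fun k => ?_
    simp only [Finset.sum_div, Finset.sum_mul, mul_pow]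
    refine Finset.sum_congr rfl fun i _ => Finset.sum_congr rfl fun j _ => ?_
    ring

lemma sq_le_exp_mul_gaussianMean (hψ : IsPlaneWaveSum ψ lam) (x : E) {t : ℝ} (ht : 0 < t) :
    ψ x ^ 2 ≤ exp (lam * t) * gaussianMean (fun y => ψ y ^ 2) x t := by
  obtain ⟨Q, hQ, hQ0, hsum⟩ := hψ.exists_nonneg_hasSum x
  have h := le_hasSum (hsum t ht) 0 fun k _ => mul_nonneg (hQ k) (by positivity)
  rwa [pow_zero, mul_one, hQ0] at h

lemma gaussianMean_two_mul_mul_le (hψ : IsPlaneWaveSum ψ lam) (x : E) {t T : ℝ} (ht : 0 < t)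
    (htT : t ≤ T) :
    exp (lam * t) * gaussianMean (fun y => ψ y ^ 2) x (2 * t) *
        gaussianMean (fun y => ψ y ^ 2) x T ≤
      exp (lam * T) * gaussianMean (fun y => ψ y ^ 2) x t *
        gaussianMean (fun y => ψ y ^ 2) x (2 * T) := by
  obtain ⟨Q, hQ, -, hsum⟩ := hψ.exists_nonneg_hasSum x
  have h := mul_le_mul_of_hasSum_pow hQ hsum one_le_two ht htT
  rw [mul_left_comm lam, two_mul (lam * t), mul_left_comm lam, two_mul (lam * T), Real.exp_add,
    Real.exp_add] at h
  refine le_of_mul_le_mul_left ?_ (Real.exp_pos (lam * t + lam * T))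
  rw [Real.exp_add]
  linarith

end IsPlaneWaveSum

end PowerSeries

section Doubling

lemma two_rpow_half_le_exp {p : ℝ} (hp : 0 ≤ p) : (2 : ℝ) ^ (p / 2) ≤ exp p := by
  rw [Real.rpow_def_of_pos two_pos]
  gcongr
  nlinarith [Real.log_two_lt_d9]

lemma two_rpow_half_mul_exp_neg_le_half {p u : ℝ} (hp : 0 ≤ p) (hu : p + 1 ≤ u) :
    (2 : ℝ) ^ (p / 2) * exp (-u) ≤ 1 / 2 := by
  calc (2 : ℝ) ^ (p / 2) * exp (-u) ≤ exp p * exp (-u) := by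
        gcongr
        exact two_rpow_half_le_exp hp
    _ = exp (p - u) := by rw [← Real.exp_add, sub_eq_add_neg]
    _ ≤ exp (-1) := by gcongr; linarith
    _ ≤ 1 / 2 := by linarith [Real.exp_neg_one_lt_d9]

lemma div_rpow_neg {a b : ℝ} (ha : 0 ≤ a) (hb : 0 ≤ b) (p : ℝ) :
    (a / b) ^ (-p) = a ^ (-p) * b ^ p := by
  rw [Real.div_rpow ha hb, Real.rpow_neg hb, div_inv_eq_mul]

lemma le_two_mul_of_forall_le_add_half {α : Type*} {f : α → ℝ} (hf : BddAbove (Set.range f))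
    {B : ℝ} (h : ∀ P, (∀ y, f y ≤ P) → ∀ y, f y ≤ B + P / 2) (y : α) : f y ≤ 2 * B := by
  have : Nonempty α := ⟨y⟩
  have hsup : ⨆ z, f z ≤ B + (⨆ z, f z) / 2 := ciSup_le (h _ (le_ciSup hf))
  linarith [le_ciSup hf y]

lemma log_sSup_div_sSup_le {α : Type*} {f : α → ℝ} (hf0 : 0 ≤ f) {S S' : Set α} {c : ℝ}
    (hc : 0 ≤ c) (h : ∀ y ∈ S', f y ≤ exp c * sSup (f '' S)) :
    log (sSup (f '' S') / sSup (f '' S)) ≤ c := by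
  have hnonneg : ∀ R : Set α, 0 ≤ sSup (f '' R) := fun R =>
    Real.sSup_nonneg (by rintro _ ⟨y, -, rfl⟩; exact hf0 y)
  have hle : sSup (f '' S') ≤ exp c * sSup (f '' S) :=
    Real.sSup_le (by rintro _ ⟨y, hy, rfl⟩; exact h y hy)
      (mul_nonneg (Real.exp_pos c).le (hnonneg S))
  have hquot : sSup (f '' S') / sSup (f '' S) ≤ exp c :=
    div_le_of_le_mul₀ (hnonneg S) (Real.exp_pos c).le hle
  rcases (div_nonneg (hnonneg S') (hnonneg S)).eq_or_lt with hzero | hpos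
  · rwa [← hzero, Real.log_zero]
  · exact (Real.log_le_iff_le_exp hpos).mpr hquot

lemma pos_of_one_le_mul_sqrt {r lam : ℝ} (h : 1 ≤ r * √lam) : 0 < r ∧ 0 < √lam := by
  have hr : 0 < r := pos_of_mul_pos_left (one_pos.trans_le h) (Real.sqrt_nonneg _)
  exact ⟨hr, pos_of_mul_pos_right (one_pos.trans_le h) hr.le⟩

lemma one_le_mul_sqrt_of_rpow_le {r lam : ℝ} (hlam : 0 < lam) (h : lam ^ (-(1 : ℝ) / 2) ≤ r) :
    1 ≤ r * √lam := by
  rwa [neg_div, Real.rpow_neg hlam.le, ← Real.sqrt_eq_rpow,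
    inv_le_iff_one_le_mul₀ (Real.sqrt_pos.mpr hlam)] at h

variable {E : Type*} [NormedAddCommGroup E] [InnerProductSpace ℝ E] [MeasurableSpace E]
  [BorelSpace E] [FiniteDimensional ℝ E]

lemma gaussianMean_le_two_mul_of_le_on_ball {f : E → ℝ} (hf : AEStronglyMeasurable f)
    (hf0 : 0 ≤ f) {P : ℝ} (hfP : ∀ y, f y ≤ P) {x : E} {s M A : ℝ} (hs : 0 < s)
    (hM : Module.finrank ℝ E + 1 ≤ M)
    (hdoubling : gaussianMean f x (2 * (s ^ 2 / (8 * M))) ≤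
      exp M * gaussianMean f x (s ^ 2 / (8 * M)))
    (hfA : ∀ y ∈ ball x s, f y ≤ A) :
    gaussianMean f x (s ^ 2 / (8 * M)) ≤ 2 * A := by
  have hM0 : 0 < M := lt_of_lt_of_le (by positivity) hM
  have ht : 0 < s ^ 2 / (8 * M) := by positivity
  have hexponent : -s ^ 2 / (4 * (s ^ 2 / (8 * M))) = -(2 * M) := by field_simp; norm_num
  have htail := gaussianMean_le_add_of_le_on_ball hf hf0 hfP ht hs hfA
  rw [hexponent] at htail
  have habsorb : 2 ^ (Module.finrank ℝ E / 2 : ℝ) * exp (-(2 * M)) * exp M ≤ 1 / 2 := by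
    rw [mul_assoc, ← Real.exp_add, show -(2 * M) + M = -M by ring]
    exact two_rpow_half_mul_exp_neg_le_half (Nat.cast_nonneg _) hM
  have hmean := gaussianMean_nonneg hf0 ht x
  have : gaussianMean f x (s ^ 2 / (8 * M)) ≤ A + 1 / 2 * gaussianMean f x (s ^ 2 / (8 * M)) := by
    refine htail.trans (add_le_add_right ?_ A)
    calc _ ≤ 2 ^ (Module.finrank ℝ E / 2 : ℝ) * exp (-(2 * M)) *
          (exp M * gaussianMean f x (s ^ 2 / (8 * M))) := by gcongr
      _ ≤ 1 / 2 * gaussianMean f x (s ^ 2 / (8 * M)) := by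
          rw [← mul_assoc]
          gcongr
  linarith

namespace IsPlaneWaveSum

variable {ψ : E → ℝ} {lam r : ℝ}

lemma aestronglyMeasurable_sq (hψ : IsPlaneWaveSum ψ lam) :
    AEStronglyMeasurable fun y => ψ y ^ 2 :=
  (hψ.continuous.pow 2).aestronglyMeasurable

lemma sq_le_of_gaussianMean_two_mul_le (hψ : IsPlaneWaveSum ψ lam) {x y : E} {s M A : ℝ}
    (hs : 0 < s) (hM : Module.finrank ℝ E + 1 ≤ M) (hlam : lam * (s ^ 2 / (8 * M)) ≤ M)
    (hdoubling : gaussianMean (fun z => ψ z ^ 2) x (2 * (s ^ 2 / (8 * M))) ≤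
      exp M * gaussianMean (fun z => ψ z ^ 2) x (s ^ 2 / (8 * M)))
    (hA : ∀ z ∈ ball x s, ψ z ^ 2 ≤ A) (hy : y ∈ ball x (2 * s)) :
    ψ y ^ 2 ≤ exp (19 * M) * A := by
  have hM0 : 0 < M := lt_of_lt_of_le (by positivity) hM
  have ht : 0 < s ^ 2 / (8 * M) := by positivity
  have hA0 : 0 ≤ A := (sq_nonneg _).trans (hA x (mem_ball_self hs))
  obtain ⟨P, hP⟩ := hψ.exists_sq_le
  have hsq0 : 0 ≤ fun z => ψ z ^ 2 := fun z => sq_nonneg (ψ z)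
  have hexponent : (2 * s) ^ 2 / (2 * (s ^ 2 / (8 * M))) = 16 * M := by field_simp; norm_num
  have hshift := gaussianMean_le_of_dist_le hψ.aestronglyMeasurable_sq hsq0 hP ht
    (mem_ball.mp hy).le
  rw [hexponent] at hshift
  have hmean := gaussianMean_le_two_mul_of_le_on_ball hψ.aestronglyMeasurable_sq hsq0 hP hs hM
    hdoubling hA
  have hmean0 := gaussianMean_nonneg hsq0 ht y
  have hmean0' := gaussianMean_nonneg hsq0 (mul_pos two_pos ht) x
  calc ψ y ^ 2 ≤ exp (lam * (s ^ 2 / (8 * M))) *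
        gaussianMean (fun z => ψ z ^ 2) y (s ^ 2 / (8 * M)) := hψ.sq_le_exp_mul_gaussianMean y ht
    _ ≤ exp M * (exp (Module.finrank ℝ E) * exp (16 * M) * (exp M * (exp 1 * A))) := by
        gcongr
        refine hshift.trans ?_
        gcongr
        · exact two_rpow_half_le_exp (Nat.cast_nonneg _)
        · refine hdoubling.trans ?_
          gcongr
          refine hmean.trans ?_
          gcongr
          linarith [Real.add_one_le_exp 1]
    _ = exp (M + (Module.finrank ℝ E + 16 * M + (M + 1))) * A := by
        simp only [Real.exp_add, mul_assoc]
    _ ≤ exp (19 * M) * A := by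
        gcongr
        linarith

lemma sq_le_exp_mul_add_half (hψ : IsPlaneWaveSum ψ lam) {t : ℝ} (ht : 0 < t) (hr : 0 ≤ r)
    (htail : Module.finrank ℝ E + 1 + lam * t ≤ r ^ 2 / (4 * t)) {P : ℝ} (hP : ∀ y, ψ y ^ 2 ≤ P)
    (y : E) :
    ψ y ^ 2 ≤ exp (lam * t) *
      ((2 * π * t) ^ (-(Module.finrank ℝ E / 2 : ℝ)) * ∫ z in ball y r, ψ z ^ 2) + P / 2 := by
  have hP0 : 0 ≤ P := (sq_nonneg _).trans (hP y)
  have habsorb : 2 ^ (Module.finrank ℝ E / 2 : ℝ) * exp (-r ^ 2 / (4 * t)) * exp (lam * t) ≤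
      1 / 2 := by
    rw [mul_assoc, ← Real.exp_add, neg_div, ← sub_eq_neg_add, ← neg_sub]
    exact two_rpow_half_mul_exp_neg_le_half (Nat.cast_nonneg _) (by linarith)
  calc ψ y ^ 2 ≤ exp (lam * t) * gaussianMean (fun z => ψ z ^ 2) y t :=
        hψ.sq_le_exp_mul_gaussianMean y ht
    _ ≤ exp (lam * t) *
          ((2 * π * t) ^ (-(Module.finrank ℝ E / 2 : ℝ)) * (∫ z in ball y r, ψ z ^ 2) +
            2 ^ (Module.finrank ℝ E / 2 : ℝ) * exp (-r ^ 2 / (4 * t)) * P) :=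
        mul_le_mul_of_nonneg_left (gaussianMean_le_setIntegral_add_bound
          hψ.aestronglyMeasurable_sq (fun z => sq_nonneg (ψ z)) hP ht y hr) (Real.exp_pos _).le
    _ ≤ _ := by linarith [mul_le_mul_of_nonneg_right habsorb hP0]

lemma sq_le_of_setIntegral_le (hψ : IsPlaneWaveSum ψ lam) (hr : 1 ≤ r * √lam) {I : ℝ}
    (hI : ∀ x, ∫ y in ball x r, ψ y ^ 2 ≤ I) (y : E) :
    ψ y ^ 2 ≤ 2 * (exp (r * √lam) *
      ((2 * π * (r / √lam)) ^ (-(Module.finrank ℝ E / 2 : ℝ)) *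
        (8 * (Module.finrank ℝ E + 2)) ^ (Module.finrank ℝ E / 2 : ℝ) * I)) := by
  obtain ⟨hr0, hlam0⟩ := pos_of_one_le_mul_sqrt hr
  set n : ℝ := (Module.finrank ℝ E : ℝ)
  have hn0 : 0 ≤ n := Nat.cast_nonneg _
  set t : ℝ := r / √lam / (8 * (n + 2)) with ht_def
  have ht : 0 < t := by positivity
  have hlamt : lam * t ≤ r * √lam := by
    calc lam * t = r * (lam / √lam) / (8 * (n + 2)) := by rw [ht_def]; ring
      _ ≤ r * √lam := by
        rw [Real.div_sqrt]
        exact div_le_self (by positivity) (by linarith)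
  have htail : n + 1 + lam * t ≤ r ^ 2 / (4 * t) := by
    calc n + 1 + lam * t ≤ 2 * (n + 2) * (r * √lam) := by nlinarith
      _ = r ^ 2 / (4 * t) := by
        rw [ht_def]
        field_simp
        norm_num
  have hnormalization : (2 * π * t) ^ (-(n / 2)) =
      (2 * π * (r / √lam)) ^ (-(n / 2)) * (8 * (n + 2)) ^ (n / 2) := by
    rw [ht_def, ← mul_div_assoc, div_rpow_neg (by positivity) (by positivity)]
  rw [← hnormalization]
  refine le_two_mul_of_forall_le_add_half hψ.bddAbove_range_sq (fun P hP y => ?_) y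
  refine (hψ.sq_le_exp_mul_add_half ht hr0.le htail hP y).trans ?_
  gcongr
  exact hI y

lemma mul_le_gaussianMean_div_sqrt (hψ : IsPlaneWaveSum ψ lam) (hr : 1 ≤ r * √lam) {I : ℝ} {x : E}
    (hI : I ≤ ∫ y in ball x r, ψ y ^ 2) :
    (2 * π * (r / √lam)) ^ (-(Module.finrank ℝ E / 2 : ℝ)) * exp (-(r * √lam / 2)) * I ≤
      gaussianMean (fun y => ψ y ^ 2) x (r / √lam) := by
  obtain ⟨hr0, hlam0⟩ := pos_of_one_le_mul_sqrt hr
  obtain ⟨P, hP⟩ := hψ.exists_sq_le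
  have hexponent : -r ^ 2 / (2 * (r / √lam)) = -(r * √lam / 2) := by field_simp
  rw [← hexponent]
  refine le_trans ?_ (mul_setIntegral_le_gaussianMean hψ.aestronglyMeasurable_sq
    (fun z => sq_nonneg (ψ z)) hP (by positivity) x r)
  gcongr

end IsPlaneWaveSum

/-- The factor by which Gaussian means over `ℝⁿ` grow, up to an exponential of `r * √lam`, from
variance `r / √lam` to twice that. -/
def doublingConstant (n : ℕ) (K₁ K₂ : ℝ) : ℝ :=
  2 * (8 * (n + 2)) ^ (n / 2 : ℝ) * K₂ / K₁

namespace IsPlaneWaveSum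

variable {ψ : E → ℝ} {lam r K₁ K₂ : ℝ}

lemma gaussianMean_two_mul_div_sqrt_le (hψ : IsPlaneWaveSum ψ lam) (hr : 1 ≤ r * √lam)
    (hK₁ : 0 < K₁)
    (hint : ∀ x : E, K₁ * r ^ Module.finrank ℝ E ≤ (∫ y in ball x r, ψ y ^ 2) ∧
      (∫ y in ball x r, ψ y ^ 2) ≤ K₂ * r ^ Module.finrank ℝ E) (x : E) :
    gaussianMean (fun y => ψ y ^ 2) x (2 * (r / √lam)) ≤
      doublingConstant (Module.finrank ℝ E) K₁ K₂ * exp (2 * (r * √lam)) *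
        gaussianMean (fun y => ψ y ^ 2) x (r / √lam) := by
  obtain ⟨hr0, hlam0⟩ := pos_of_one_le_mul_sqrt hr
  have hK₂ : 0 < K₂ := hK₁.trans_le
    (le_of_mul_le_mul_right ((hint x).1.trans (hint x).2) (by positivity))
  have hlower := hψ.mul_le_gaussianMean_div_sqrt hr (hint x).1
  have hupper := gaussianMean_le hψ.aestronglyMeasurable_sq (fun z => sq_nonneg (ψ z))
    (hψ.sq_le_of_setIntegral_le hr fun y => (hint y).2)
    (show 0 < 2 * (r / √lam) by positivity) x
  set W : ℝ := (2 * π * (r / √lam)) ^ (-(Module.finrank ℝ E / 2 : ℝ))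
  calc gaussianMean (fun y => ψ y ^ 2) x (2 * (r / √lam))
      ≤ 2 * (exp (r * √lam) * (W * (8 * (Module.finrank ℝ E + 2)) ^ (Module.finrank ℝ E / 2 : ℝ) *
          (K₂ * r ^ Module.finrank ℝ E))) := hupper
    _ = doublingConstant (Module.finrank ℝ E) K₁ K₂ * exp (r * √lam + r * √lam / 2) *
          (W * exp (-(r * √lam / 2)) * (K₁ * r ^ Module.finrank ℝ E)) := by
        rw [doublingConstant, Real.exp_add, Real.exp_neg]
        field_simp
    _ ≤ doublingConstant (Module.finrank ℝ E) K₁ K₂ * exp (2 * (r * √lam)) *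
          gaussianMean (fun y => ψ y ^ 2) x (r / √lam) := by
        unfold doublingConstant
        gcongr
        linarith

lemma gaussianMean_two_mul_le (hψ : IsPlaneWaveSum ψ lam) (hr : 1 ≤ r * √lam) (hK₁ : 0 < K₁)
    (hint : ∀ x : E, K₁ * r ^ Module.finrank ℝ E ≤ (∫ y in ball x r, ψ y ^ 2) ∧
      (∫ y in ball x r, ψ y ^ 2) ≤ K₂ * r ^ Module.finrank ℝ E) (x : E) {t : ℝ} (ht : 0 < t)
    (htr : t ≤ r / √lam) :
    gaussianMean (fun y => ψ y ^ 2) x (2 * t) ≤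
      doublingConstant (Module.finrank ℝ E) K₁ K₂ * exp (3 * (r * √lam)) *
        gaussianMean (fun y => ψ y ^ 2) x t := by
  obtain ⟨hr0, hlam0⟩ := pos_of_one_le_mul_sqrt hr
  have hlam : 0 < lam := Real.sqrt_pos.mp hlam0
  have hnonneg : ∀ {u : ℝ}, 0 < u → 0 ≤ gaussianMean (fun y => ψ y ^ 2) x u := fun hu =>
    gaussianMean_nonneg (fun y => sq_nonneg (ψ y)) hu x
  have hpos : 0 < gaussianMean (fun y => ψ y ^ 2) x (r / √lam) :=
    lt_of_lt_of_le (by positivity) (hψ.mul_le_gaussianMean_div_sqrt hr (hint x).1)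
  have hlamr : lam * (r / √lam) = r * √lam := by
    rw [mul_div_left_comm, Real.div_sqrt]
  refine le_of_mul_le_mul_right ?_ hpos
  calc gaussianMean (fun y => ψ y ^ 2) x (2 * t) * gaussianMean (fun y => ψ y ^ 2) x (r / √lam)
      ≤ exp (lam * t) * gaussianMean (fun y => ψ y ^ 2) x (2 * t) *
          gaussianMean (fun y => ψ y ^ 2) x (r / √lam) := by
        gcongr
        exact le_mul_of_one_le_left (hnonneg (by positivity)) (Real.one_le_exp (by positivity))
    _ ≤ exp (r * √lam) * gaussianMean (fun y => ψ y ^ 2) x t *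
          gaussianMean (fun y => ψ y ^ 2) x (2 * (r / √lam)) :=
        hlamr ▸ hψ.gaussianMean_two_mul_mul_le x ht htr
    _ ≤ exp (r * √lam) * gaussianMean (fun y => ψ y ^ 2) x t *
          (doublingConstant (Module.finrank ℝ E) K₁ K₂ * exp (2 * (r * √lam)) *
            gaussianMean (fun y => ψ y ^ 2) x (r / √lam)) := by
        have := hnonneg ht
        gcongr
        exact hψ.gaussianMean_two_mul_div_sqrt_le hr hK₁ hint x
    _ = doublingConstant (Module.finrank ℝ E) K₁ K₂ * exp (3 * (r * √lam)) *
          gaussianMean (fun y => ψ y ^ 2) x t * gaussianMean (fun y => ψ y ^ 2) x (r / √lam) := by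
        rw [show 3 * (r * √lam) = r * √lam + 2 * (r * √lam) by ring, Real.exp_add]
        ring

end IsPlaneWaveSum

/-- The exponential rate, per unit of `r * √lam`, of the doubling of Gaussian means at all scales
relevant to balls of radius at most `κ * r`. The term `κ ^ 2` makes these scales at most
`r / √lam`, where the doubling is available, and the dimension lets the rate beat Gaussian tails. -/
def doublingRate (n : ℕ) (κ K₁ K₂ : ℝ) : ℝ :=
  κ ^ 2 + n + 4 + |log (doublingConstant n K₁ K₂)|

lemma doublingRate_pos (n : ℕ) (κ K₁ K₂ : ℝ) : 0 < doublingRate n κ K₁ K₂ := by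
  unfold doublingRate
  positivity

lemma doublingConstant_mul_exp_le (n : ℕ) (κ K₁ K₂ : ℝ) {N : ℝ} (hN : 1 ≤ N) :
    doublingConstant n K₁ K₂ * exp (3 * N) ≤ exp (doublingRate n κ K₁ K₂ * N) := by
  calc doublingConstant n K₁ K₂ * exp (3 * N)
      ≤ exp (log (doublingConstant n K₁ K₂)) * exp (3 * N) := by
        gcongr
        exact Real.le_exp_log _
    _ = exp (log (doublingConstant n K₁ K₂) + 3 * N) := (Real.exp_add _ _).symm
    _ ≤ exp (doublingRate n κ K₁ K₂ * N) := by
        gcongr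
        rw [doublingRate]
        nlinarith [sq_nonneg κ, n.cast_nonneg (α := ℝ),
          le_abs_self (log (doublingConstant n K₁ K₂)), abs_nonneg (log (doublingConstant n K₁ K₂))]

lemma IsPlaneWaveSum.log_sSup_sq_div_sSup_sq_le {ψ : E → ℝ} {lam r κ K₁ K₂ : ℝ}
    (hψ : IsPlaneWaveSum ψ lam) (hr : 1 ≤ r * √lam) (hK₁ : 0 < K₁)
    (hint : ∀ x : E, K₁ * r ^ Module.finrank ℝ E ≤ (∫ y in ball x r, ψ y ^ 2) ∧
      (∫ y in ball x r, ψ y ^ 2) ≤ K₂ * r ^ Module.finrank ℝ E) (x : E) {s : ℝ} (hs : 0 < s)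
    (hsr : s ≤ κ * r) :
    log (sSup ((fun y => ψ y ^ 2) '' ball x (2 * s)) / sSup ((fun y => ψ y ^ 2) '' ball x s)) ≤
      19 * (doublingRate (Module.finrank ℝ E) κ K₁ K₂ * (r * √lam)) := by
  obtain ⟨hr0, hlam0⟩ := pos_of_one_le_mul_sqrt hr
  have hlam : 0 < lam := Real.sqrt_pos.mp hlam0
  have hrate : κ ^ 2 + Module.finrank ℝ E + 1 ≤ doublingRate (Module.finrank ℝ E) κ K₁ K₂ := by
    unfold doublingRate
    linarith [abs_nonneg (log (doublingConstant (Module.finrank ℝ E) K₁ K₂))]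
  have : (0 : ℝ) ≤ Module.finrank ℝ E := Nat.cast_nonneg _
  set M := doublingRate (Module.finrank ℝ E) κ K₁ K₂ * (r * √lam)
  have hM : Module.finrank ℝ E + 1 ≤ M := by nlinarith [sq_nonneg κ]
  have hκM : κ ^ 2 * (r * √lam) ≤ M :=
    mul_le_mul_of_nonneg_right (by linarith) (by positivity)
  have hM0 : 0 < M := by linarith
  have ht : 0 < s ^ 2 / (8 * M) := by positivity
  have htr : s ^ 2 / (8 * M) ≤ r / √lam := by
    rw [div_le_div_iff₀ (by positivity) hlam0]
    calc s ^ 2 * √lam ≤ (κ * r) ^ 2 * √lam := by gcongr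
      _ = r * (κ ^ 2 * (r * √lam)) := by ring
      _ ≤ r * (8 * M) := mul_le_mul_of_nonneg_left (by linarith) hr0.le
  have hlamt : lam * (s ^ 2 / (8 * M)) ≤ M := by
    calc lam * (s ^ 2 / (8 * M)) ≤ lam * (r / √lam) := by gcongr
      _ = r * √lam := by rw [mul_div_left_comm, Real.div_sqrt]
      _ ≤ M := le_mul_of_one_le_left (by positivity) (by linarith [sq_nonneg κ])
  have hdoubling := (hψ.gaussianMean_two_mul_le hr hK₁ hint x ht htr).trans
    (mul_le_mul_of_nonneg_right (doublingConstant_mul_exp_le _ κ K₁ K₂ hr)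
      (gaussianMean_nonneg (fun y => sq_nonneg (ψ y)) ht x))
  refine log_sSup_div_sSup_le (fun y => sq_nonneg (ψ y)) (by positivity) fun y hy => ?_
  refine hψ.sq_le_of_gaussianMean_two_mul_le hs hM hlamt hdoubling (fun z hz => ?_) hy
  exact le_csSup (hψ.bddAbove_range_sq.mono (Set.image_subset_range _ _))
    (Set.mem_image_of_mem _ hz)

end Doubling

theorem improved_doubling_estimate_general
    {E : Type*} [NormedAddCommGroup E] [InnerProductSpace ℝ E] [MeasurableSpace E]
    [BorelSpace E] [FiniteDimensional ℝ E] (K₁ K₂ κ : ℝ) (hK₁ : 0 < K₁) :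
    ∃ c : ℝ, 0 < c ∧ ∀ (ψ : E → ℝ) (lam : ℝ), IsPlaneWaveSum ψ lam →
      ∀ r : ℝ, 1 ≤ r * √lam →
      (∀ x : E, K₁ * r ^ Module.finrank ℝ E ≤ (∫ y in ball x r, ψ y ^ 2) ∧
        (∫ y in ball x r, ψ y ^ 2) ≤ K₂ * r ^ Module.finrank ℝ E) →
      ∀ (x : E) (s : ℝ), 0 < s → s < κ * r →
        log (sSup ((fun y => ψ y ^ 2) '' ball x (2 * s)) /
          sSup ((fun y => ψ y ^ 2) '' ball x s)) ≤ c * r * √lam := by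
  refine ⟨19 * doublingRate (Module.finrank ℝ E) κ K₁ K₂,
    mul_pos (by norm_num) (doublingRate_pos _ _ _ _), fun ψ lam hψ r hr hint x s hs hsr => ?_⟩
  simpa only [mul_assoc] using hψ.log_sSup_sq_div_sSup_sq_le hr hK₁ hint x hs hsr.le

theorem improved_doubling_estimate
    (n : ℕ) (hn : 1 ≤ n) (K₁ K₂ : ℝ) (hK₁ : 0 < K₁) (hK : K₁ ≤ K₂) :
    ∃ c r₀ : ℝ, 0 < c ∧ 0 < r₀ ∧
      ∀ (ψ : EuclideanSpace ℝ (Fin n) → ℝ) (lam : ℝ),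
        1 ≤ lam → ContDiff ℝ (⊤ : ℕ∞) ψ → ZnPeriodic n ψ →
        (∀ x, lap n ψ x = -lam * ψ x) →
        ∀ r : ℝ, lam ^ (-(1:ℝ)/2) ≤ r → r ≤ r₀ →
        (∀ x : EuclideanSpace ℝ (Fin n),
          K₁ * r ^ n ≤ (∫ y in Metric.ball x r, (ψ y)^2) ∧
          (∫ y in Metric.ball x r, (ψ y)^2) ≤ K₂ * r ^ n) →
        ∀ (x : EuclideanSpace ℝ (Fin n)) (s : ℝ), 0 < s → s < 10*r →
          Real.log (sSup ((fun y => (ψ y)^2) '' Metric.ball x (2*s)) /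
              sSup ((fun y => (ψ y)^2) '' Metric.ball x s)) ≤ c * r * Real.sqrt lam := by
  obtain ⟨c, hc, h⟩ :=
    improved_doubling_estimate_general (E := EuclideanSpace ℝ (Fin n)) K₁ K₂ 10 hK₁
  exact ⟨c, 1, hc, one_pos, fun ψ lam hlam hψ hper hlap r hr _ hint => h ψ lam
    (hper.isPlaneWaveSum (contDiff_infty.mp hψ 2) hlap) r
    (one_le_mul_sqrt_of_rpow_le (by linarith) hr)
    (by simpa only [finrank_euclideanSpace_fin] using hint)⟩
end
end
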